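/- arXiv:1801.10485 — 3 statements merged into one kernel-verified Lean document; each statement's English description precedes it below -/
import Mathlib

section
/- Let X be a smooth projective variety of dimension 2d over ℂ and let ℰ ∈ D^b(X) be a ℙ^d-object with associated ℙ^d-twist P_ℰ. Then for every real number t ≤ 0, the categorical entropy satisfies h_t(P_ℰ) = -2dt. -/
open CategoryTheory CategoryTheory.Limits CategoryTheory.Pretriangulated Filter

universe v u

variable (C : Type u) [Category.{v} C] [Preadditive C] [HasZeroObject C]
  [HasShift C ℤ] [∀ n : ℤ, (shiftFunctor C n).Additive] [Pretriangulated C]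
  [HasFiniteBiproducts C] [CategoryTheory.Linear ℂ C]
  [∀ X Y : C, Module.Finite ℂ (X ⟶ Y)]

/-- `BuildVal E t B r` : the object `B` can be built from the zero object by a tower of
`k` distinguished triangles whose successive cones are shifts `E⟦nᵢ⟧` of `E`,
with total weight `r = ∑ᵢ exp(nᵢ t)`. -/
inductive BuildVal (E : C) (t : ℝ) : C → ℝ → Prop
  | zero (Z : C) (hZ : IsZero Z) : BuildVal E t Z 0
  | step (A B : C) (n : ℤ) (r : ℝ)
      (f : A ⟶ B) (g : B ⟶ (shiftFunctor C n).obj E)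
      (h : (shiftFunctor C n).obj E ⟶ (shiftFunctor C (1 : ℤ)).obj A)
      (hT : Triangle.mk f g h ∈ distTriang C)
      (hA : BuildVal E t A r) :
      BuildVal E t B (r + Real.exp ((n : ℝ) * t))

/-- The set of weights `∑ᵢ exp(nᵢ t)` of towers of distinguished triangles with cones
shifts of `E`, ending at an object isomorphic to `F ⊕ F'` for some `F'`. -/
def complexitySet (E F : C) (t : ℝ) : Set ℝ :=
  {r | ∃ B F' : C, BuildVal C E t B r ∧ Nonempty (B ≅ F ⊞ F')}

/-- The complexity `δ_t(E, F)` of `F` relative to `E` (Dimitrov–Haiden–Katzarkov–Kontsevich). -/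
noncomputable def complexity (E F : C) (t : ℝ) : ℝ :=
  sInf (complexitySet C E F t)

/-- `F` lies in the split closure `⟨E⟩` of `E` (expressed via towers). -/
def InSplitClosure (E F : C) : Prop :=
  (complexitySet C E F 0).Nonempty

/-- `G` is a split generator of the triangulated category. -/
def IsSplitGenerator (G : C) : Prop :=
  ∀ F : C, InSplitClosure C G F

/-- The right orthogonal `E^⊥ = {F : Hom^*(E,F) = 0}`. -/
def rightOrthogonal (E : C) : Set C :=
  {F | ∀ (n : ℤ) (f : E ⟶ (shiftFunctor C n).obj F), f = 0}

/-- A `ℙ^d`-object in a ℂ-linear triangulated category (an abstract model of a `ℙ^d`-object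
in `D^b(X)` for `X` smooth projective of dimension `2d` over `ℂ`, in the sense of
Huybrechts–Thomas): `E` is a `2d`-Calabi–Yau object (the Serre-duality reformulation of
`E ⊗ ω_X ≅ E`) and the graded ring `Hom^*(E,E)` is isomorphic to
`H^*(ℙ^d; ℂ) = ℂ[h]/(h^{d+1})`, `deg h = 2`: the graded pieces `Hom^{2k}(E,E)`, `0 ≤ k ≤ d`,
are one-dimensional, spanned by the powers `h^k`, and all other graded pieces vanish. -/
structure PdObject (d : ℕ) where
  E : C
  nonzero : ¬ IsZero E
  /-- Serre-duality form of `E ⊗ ω_X ≅ E` on a `2d`-dimensional variety: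
  `Hom(E, F) ≅ Hom(F, E[2d])^∨` for every `F`. -/
  CY : ∀ F : C, (E ⟶ F) ≃ₗ[ℂ] Module.Dual ℂ (F ⟶ (shiftFunctor C (2 * (d : ℤ))).obj E)
  /-- a generator `h ∈ Hom²(E, E)`. -/
  h : E ⟶ (shiftFunctor C (2 : ℤ)).obj E
  /-- the powers `h^k ∈ Hom^{2k}(E, E)` of `h`. -/
  hpow : ∀ k : ℕ, (E ⟶ (shiftFunctor C (2 * (k : ℤ))).obj E)
  hpow_zero : hpow 0 = (shiftFunctorZero' C (2 * ((0 : ℕ) : ℤ)) (by simp)).inv.app E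
  hpow_succ : ∀ k : ℕ,
    hpow (k + 1) = h ≫ (shiftFunctor C (2 : ℤ)).map (hpow k) ≫
      (shiftFunctorAdd' C (2 * (k : ℤ)) (2 : ℤ) (2 * ((k + 1 : ℕ) : ℤ))
        (by push_cast; ring)).inv.app E
  /-- `Hom^{2k}(E,E)` is one-dimensional for `0 ≤ k ≤ d`. -/
  hom_rank_one : ∀ k : ℕ, k ≤ d →
    Module.finrank ℂ (E ⟶ (shiftFunctor C (2 * (k : ℤ))).obj E) = 1
  /-- all other graded pieces of `Hom^*(E,E)` vanish. -/
  hom_rank_zero : ∀ n : ℤ, (¬ ∃ k : ℕ, k ≤ d ∧ n = 2 * (k : ℤ)) →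
    ∀ f : E ⟶ (shiftFunctor C n).obj E, f = 0
  /-- the powers `h^k`, `k ≤ d`, are nonzero (so they span the graded pieces). -/
  hpow_ne_zero : ∀ k : ℕ, k ≤ d → hpow k ≠ 0

/-- The `ℙ^d`-twist `P_E` associated to a `ℙ^d`-object `E` (Huybrechts–Thomas):
an autoequivalence `P` such that each `P(F)` is obtained by the double cone construction
`P(F) = Cone(Cone(Hom^{*-2}(E,F) ⊗ E → Hom^*(E,F) ⊗ E) → F)`.
Here `H F` models the object `Hom^*(E,F) ⊗ E`, i.e. the finite direct sum of shifts
`E[-n]` with multiplicity `dim Hom^n(E,F)`, so that `Hom^{*-2}(E,F) ⊗ E = (H F)[-2]`;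
`θ F` models the map `h^∨·id − id·h`; `T F` models its cone; and `P F` is the cone of
the induced evaluation map `T F → F`. -/
structure PdTwist (d : ℕ) extends PdObject C d where
  /-- the twist autoequivalence. -/
  P : C ≌ C
  /-- the twist commutes with the shift functors. -/
  commShift : P.functor.CommShift ℤ
  /-- `H F` models `Hom^*(E,F) ⊗ E`. -/
  H : C → C
  /-- `H F` is a finite direct sum of shifts `E[-n]`, with multiplicity
  `dim_ℂ Hom^n(E,F)` for each `n`. -/
  H_iso : ∀ F : C, ∃ (k : ℕ) (ns : Fin k → ℤ),
    Nonempty (H F ≅ biproduct (fun i => (shiftFunctor C (ns i)).obj E)) ∧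
    ∀ n : ℤ, (Finset.univ.filter fun i => ns i = -n).card
        = Module.finrank ℂ (E ⟶ (shiftFunctor C n).obj F)
  /-- the map `h^∨·id − id·h : Hom^{*-2}(E,F) ⊗ E → Hom^*(E,F) ⊗ E`. -/
  θ : ∀ F : C, (shiftFunctor C (-2 : ℤ)).obj (H F) ⟶ H F
  /-- the inner cone `T F = Cone(θ F)`. -/
  T : C → C
  ι : ∀ F : C, H F ⟶ T F
  π : ∀ F : C, T F ⟶ (shiftFunctor C (1 : ℤ)).obj ((shiftFunctor C (-2 : ℤ)).obj (H F))
  innerTri : ∀ F : C, Triangle.mk (θ F) (ι F) (π F) ∈ distTriang C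
  /-- the map `T F → F` induced by the evaluation `Hom^*(E,F) ⊗ E → F`. -/
  ev : ∀ F : C, T F ⟶ F
  η : ∀ F : C, F ⟶ P.functor.obj F
  dl : ∀ F : C, P.functor.obj F ⟶ (shiftFunctor C (1 : ℤ)).obj (T F)
  /-- `P F = Cone(T F → F)`. -/
  outerTri : ∀ F : C, Triangle.mk (ev F) (η F) (dl F) ∈ distTriang C

/-! Let `E` be the `ℙ^d`-object, `P` its twist, `G` a split generator and `q = e^{-2dt}`.

The key fact is `P E ≅ E⟦-2d⟧`, although `θ` is an arbitrary map here. Since `Hom^*(E, E)` is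
concentrated in even degrees between `0` and `2d`, a degree count shows that some shift of `E`
splits off `(H E)⟦-2⟧` and is killed by `θ`. It survives, shifted by two, as a retract of `P E`,
and all of `P E` is covered because `P E` has only scalar endomorphisms. The top degree of
`Hom^*(E, P E)` then determines the shift.

Consequently `dim Homⁿ(E, P F) = dim Hom^{n-2d}(E, F)`, so `P` multiplies the Poincaré series
`∑ₙ dim Homⁿ(E, F) e^{-nt}` by `q`. The series is subadditive on distinguished triangles, which
gives `q ^ n ≤ δ_t(G, Pⁿ G)`. Conversely `P F` is obtained from `F` by attaching shifts of `E`
whose number is constant along the orbit of `G` and whose total weight is a multiple of the series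
of `F`. As `1 ≤ q` for `t ≤ 0`, this gives `δ_t(G, Pⁿ G) ≤ (1 + n c) q ^ n`. -/

namespace CategoricalEntropy

section Preadditive

variable {𝒯 : Type*} [Category 𝒯] [Preadditive 𝒯] [HasBinaryBiproducts 𝒯]

theorem nonempty_retract_biprod {X Z Y : 𝒯} (rX : Retract X Y) (rZ : Retract Z Y)
    (h : rX.i ≫ rZ.r = 0) : Nonempty (Retract (X ⊞ Z) Y) :=
  ⟨{ i := biprod.desc rX.i rZ.i
     r := biprod.lift (rX.r - rZ.r ≫ rZ.i ≫ rX.r) rZ.r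
     retract := by
      apply biprod.hom_ext' <;> apply biprod.hom_ext <;>
        simp [h, reassoc_of% h] }⟩

end Preadditive

section Triangles

variable {𝒯 : Type*} [Category 𝒯] [Preadditive 𝒯] [HasZeroObject 𝒯] [HasShift 𝒯 ℤ]
  [∀ n : ℤ, (shiftFunctor 𝒯 n).Additive] [Pretriangulated 𝒯]
  {A B K : 𝒯} {f : A ⟶ B} {g : B ⟶ K} {h : K ⟶ A⟦(1 : ℤ)⟧}

theorem exists_comp_eq_of_mor₃_comp_eq_zero (hT : Triangle.mk f g h ∈ distTriang 𝒯) {X : 𝒯}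
    (x : A ⟶ X) (hx : h ≫ x⟦(1 : ℤ)⟧' = 0) : ∃ y : B ⟶ X, f ≫ y = x := by
  obtain ⟨y, hy, -⟩ : ∃ y : B ⟶ X, f ≫ y = x ≫ 𝟙 X ∧ g ≫ 0 = y ≫ 0 :=
    complete_distinguished_triangle_morphism₂ _ _ hT (contractible_distinguished X) x 0
      (hx.trans zero_comp.symm)
  exact ⟨y, hy.trans (Category.comp_id x)⟩

theorem exists_retract_middle {A' B' K' : 𝒯} {f' : A' ⟶ B'} {g' : B' ⟶ K'}
    {h' : K' ⟶ A'⟦(1 : ℤ)⟧} (hT : Triangle.mk f g h ∈ distTriang 𝒯)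
    (hT' : Triangle.mk f' g' h' ∈ distTriang 𝒯) (rA : Retract A A') (rK : Retract K K')
    (hi : h ≫ rA.i⟦(1 : ℤ)⟧' = rK.i ≫ h') (hr : h' ≫ rA.r⟦(1 : ℤ)⟧' = rK.r ≫ h) :
    ∃ rB : Retract B B', f' ≫ rB.r = rA.r ≫ f := by
  obtain ⟨i, hi₁, hi₂⟩ : ∃ i : B ⟶ B', f ≫ i = rA.i ≫ f' ∧ g ≫ rK.i = i ≫ g' :=
    complete_distinguished_triangle_morphism₂ _ _ hT hT' rA.i rK.i hi
  obtain ⟨r, hr₁, hr₂⟩ : ∃ r : B' ⟶ B, f' ≫ r = rA.r ≫ f ∧ g' ≫ rK.r = r ≫ g :=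
    complete_distinguished_triangle_morphism₂ _ _ hT' hT rA.r rK.r hr
  have hf : f ≫ i ≫ r = f := by rw [reassoc_of% hi₁, hr₁, rA.retract_assoc]
  have hg : g = (i ≫ r) ≫ g := by
    rw [Category.assoc, ← hr₂, ← reassoc_of% hi₂, rK.retract, Category.comp_id]
  have : IsIso (i ≫ r) :=
    isIso₂_of_isIso₁₃ (Triangle.homMk (Triangle.mk f g h) (Triangle.mk f g h) (𝟙 A) (i ≫ r) (𝟙 K)
      (hf.trans (Category.id_comp f).symm) ((Category.comp_id g).trans hg)
      (show h ≫ (𝟙 A)⟦(1 : ℤ)⟧' = 𝟙 K ≫ h by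
        rw [CategoryTheory.Functor.map_id, Category.comp_id, Category.id_comp])) hT hT
      (inferInstance : IsIso (𝟙 A)) (inferInstance : IsIso (𝟙 K))
  refine ⟨⟨i, r ≫ inv (i ≫ r), by rw [← Category.assoc, IsIso.hom_inv_id]⟩, ?_⟩
  rw [reassoc_of% hr₁, ← (IsIso.eq_comp_inv (i ≫ r)).2 hf]

theorem nonempty_retract_cone (hT : Triangle.mk f g h ∈ distTriang 𝒯) {L : 𝒯} (e : Retract L A)
    (he : e.i ≫ f = 0) : Nonempty (Retract (L⟦(1 : ℤ)⟧) K) := by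
  obtain ⟨μ, hμ⟩ : ∃ μ : L⟦(1 : ℤ)⟧ ⟶ K, e.i⟦(1 : ℤ)⟧' = μ ≫ h :=
    Triangle.coyoneda_exact₁ _ hT _ (show e.i⟦(1 : ℤ)⟧' ≫ f⟦(1 : ℤ)⟧' = 0 by
      rw [← Functor.map_comp, he, Functor.map_zero])
  exact ⟨⟨μ, h ≫ e.r⟦(1 : ℤ)⟧', by
    rw [← Category.assoc, ← hμ, ← Functor.map_comp, e.retract, CategoryTheory.Functor.map_id]⟩⟩

theorem exists_triangle_biprod (hT : Triangle.mk f g h ∈ distTriang 𝒯) (X : 𝒯) :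
    ∃ (Y : 𝒯) (f' : X ⊞ A ⟶ Y) (g' : Y ⟶ K) (h' : K ⟶ (X ⊞ A)⟦(1 : ℤ)⟧),
      Triangle.mk f' g' h' ∈ distTriang 𝒯 ∧ Nonempty (Retract (X ⊞ B) Y) := by
  obtain ⟨Y, f', g', hY⟩ := distinguished_cocone_triangle₂
    (h ≫ (biprod.inr : A ⟶ X ⊞ A)⟦(1 : ℤ)⟧')
  obtain ⟨r, hr⟩ := exists_retract_middle hT hY ⟨biprod.inr, biprod.snd, by simp⟩
    (Retract.refl K) (by simp) (by simp [← Functor.map_comp])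
  obtain ⟨p, hp⟩ := exists_comp_eq_of_mor₃_comp_eq_zero hY (biprod.fst : X ⊞ A ⟶ X)
    (by simp [← Functor.map_comp])
  exact ⟨Y, f', g', _, hY, nonempty_retract_biprod ⟨biprod.inl ≫ f', p, by simp [hp]⟩ r
    (by simp [hr])⟩

/-- The octahedral property would make `B₁ ⟶ B ⟶ K₃` distinguished. Without it, an extension `V` of
`K₃` by `B₁` still contains `B` as a retract once `K` is added to it. -/
theorem exists_triangle_retract_biprod {B₁ K₁ K₃ : 𝒯} {u : K₁ ⟶ K} {p : K ⟶ K₃}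
    {δ : K₃ ⟶ K₁⟦(1 : ℤ)⟧} {f₁ : A ⟶ B₁} {g₁ : B₁ ⟶ K₁} (hK : Triangle.mk u p δ ∈ distTriang 𝒯)
    (hB : Triangle.mk f g h ∈ distTriang 𝒯) (hB₁ : Triangle.mk f₁ g₁ (u ≫ h) ∈ distTriang 𝒯) :
    ∃ (V : 𝒯) (q : B₁ ⟶ V) (k : V ⟶ K₃) (v : K₃ ⟶ B₁⟦(1 : ℤ)⟧),
      Triangle.mk q k v ∈ distTriang 𝒯 ∧ Nonempty (Retract B (V ⊞ K)) := by
  obtain ⟨v, hpv, hvg⟩ : ∃ v : K₃ ⟶ B₁⟦(1 : ℤ)⟧,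
      p ≫ v = h ≫ f₁⟦(1 : ℤ)⟧' ∧ v ≫ g₁⟦(1 : ℤ)⟧' = δ := by
    obtain ⟨c, hpc, hcg⟩ : ∃ c : K₃ ⟶ B₁⟦(1 : ℤ)⟧, p ≫ c = h ≫ (-f₁⟦(1 : ℤ)⟧') ∧
        δ ≫ (𝟙 K₁)⟦(1 : ℤ)⟧' = c ≫ (-g₁⟦(1 : ℤ)⟧') :=
      complete_distinguished_triangle_morphism _ _ hK
        (rot_of_distTriang _ (rot_of_distTriang _ hB₁)) (𝟙 K₁) h (Category.id_comp _).symm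
    exact ⟨-c, by simp [hpc], by simpa using hcg.symm⟩
  obtain ⟨V, q, k, hV⟩ := distinguished_cocone_triangle₂ v
  obtain ⟨j, hj, -⟩ : ∃ j : B ⟶ V, f ≫ j = f₁ ≫ q ∧ g ≫ p = j ≫ k :=
    complete_distinguished_triangle_morphism₂ _ _ hB hV f₁ p hpv.symm
  have hhf : h ≫ f⟦(1 : ℤ)⟧' = 0 := comp_distTriang_mor_zero₃₁ _ hB
  obtain ⟨x, hx⟩ : ∃ x : B₁ ⟶ B, f₁ ≫ x = f :=
    exists_comp_eq_of_mor₃_comp_eq_zero hB₁ f (by rw [Category.assoc, hhf, comp_zero])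
  obtain ⟨w, hw⟩ : ∃ w : K₁⟦(1 : ℤ)⟧ ⟶ B⟦(1 : ℤ)⟧, v ≫ x⟦(1 : ℤ)⟧' = δ ≫ w :=
    Triangle.yoneda_exact₃ _ hK _ (show p ≫ v ≫ x⟦(1 : ℤ)⟧' = 0 by
      rw [reassoc_of% hpv, ← Functor.map_comp, hx, hhf])
  obtain ⟨w, rfl⟩ := (shiftFunctor 𝒯 (1 : ℤ)).map_surjective w
  obtain ⟨y, hy⟩ : ∃ y : V ⟶ B, q ≫ y = x - g₁ ≫ w :=
    exists_comp_eq_of_mor₃_comp_eq_zero hV _ (by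
      rw [Functor.map_sub, Functor.map_comp, Preadditive.comp_sub, reassoc_of% hvg, hw, sub_self])
  have hfg₁ : f₁ ≫ g₁ = 0 := comp_distTriang_mor_zero₁₂ _ hB₁
  obtain ⟨m, hm⟩ : ∃ m : K ⟶ B, 𝟙 B - j ≫ y = g ≫ m :=
    Triangle.yoneda_exact₂ _ hB _ (show f ≫ (𝟙 B - j ≫ y) = 0 by
      simp [reassoc_of% hj, hy, hx, reassoc_of% hfg₁])
  exact ⟨V, q, k, v, hV, ⟨biprod.lift j g, biprod.desc y m, by
    rw [biprod.lift_desc, ← hm, add_sub_cancel]⟩⟩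

/-- `CostLE G t F r`: the object `F` is a retract of an object built from shifts of `G` with total
weight at most `r`, that is, `δ_t(G, F) ≤ r` is witnessed by a tower. -/
def CostLE (G : 𝒯) (t : ℝ) (F : 𝒯) (r : ℝ) : Prop :=
  ∃ (B : 𝒯) (r' : ℝ), r' ≤ r ∧ BuildVal 𝒯 G t B r' ∧ Nonempty (Retract F B)

/-- `AttachCostLE G t K s`: in every distinguished triangle `A ⟶ B ⟶ K ⟶ A⟦1⟧`, the cost of `B`
exceeds that of `A` by at most `s`. This replaces the concatenation of towers, which would need
the octahedral property. -/
def AttachCostLE (G : 𝒯) (t : ℝ) (K : 𝒯) (s : ℝ) : Prop :=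
  ∀ ⦃A B : 𝒯⦄ ⦃r : ℝ⦄ (f : A ⟶ B) (g : B ⟶ K) (h : K ⟶ A⟦(1 : ℤ)⟧),
    Triangle.mk f g h ∈ distTriang 𝒯 → CostLE G t A r → CostLE G t B (r + s)

variable {G F F' : 𝒯} {t r s : ℝ}

theorem buildVal_nonneg (hF : BuildVal 𝒯 G t F r) : 0 ≤ r := by
  induction hF with
  | zero => exact le_rfl
  | step => positivity

theorem nonneg_of_mem_complexitySet (hr : r ∈ complexitySet 𝒯 G F t) : 0 ≤ r := by
  obtain ⟨_, _, hB, -⟩ := hr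
  exact buildVal_nonneg hB

theorem exists_iso_biprod_of_retract (e : Retract F F') :
    ∃ K : 𝒯, Nonempty (F' ≅ F ⊞ K) := by
  obtain ⟨K, g, h, hT⟩ := distinguished_cocone_triangle e.i
  have : Mono (Triangle.mk e.i g h).mor₁ := inferInstanceAs (Mono e.i)
  obtain ⟨φ, -⟩ := exists_iso_binaryBiproduct_of_distTriang _ hT
    ((Triangle.mor₃_eq_zero_iff_mono₁ _ hT).2 this)
  exact ⟨K, ⟨φ⟩⟩

namespace CostLE

theorem mono (hF : CostLE G t F r) (hrs : r ≤ s) : CostLE G t F s := by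
  obtain ⟨B, r', hr', hB, e⟩ := hF
  exact ⟨B, r', hr'.trans hrs, hB, e⟩

theorem of_retract (hF : CostLE G t F r) (e : Retract F' F) : CostLE G t F' r := by
  obtain ⟨B, r', hr', hB, ⟨e'⟩⟩ := hF
  exact ⟨B, r', hr', hB, ⟨e.trans e'⟩⟩

theorem of_isZero (hF : IsZero F) : CostLE G t F 0 :=
  ⟨F, 0, le_rfl, .zero F hF, ⟨.refl F⟩⟩

theorem exists_mem_complexitySet (hF : CostLE G t F r) : ∃ r' ∈ complexitySet 𝒯 G F t, r' ≤ r := by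
  obtain ⟨B, r', hr', hB, ⟨e⟩⟩ := hF
  obtain ⟨K, φ⟩ := exists_iso_biprod_of_retract e
  exact ⟨r', ⟨B, K, hB, φ⟩, hr'⟩

theorem complexity_le (hF : CostLE G t F r) : complexity 𝒯 G F t ≤ r := by
  obtain ⟨r', hr', hle⟩ := hF.exists_mem_complexitySet
  exact (csInf_le ⟨0, fun _ => nonneg_of_mem_complexitySet⟩ hr').trans hle

end CostLE

namespace AttachCostLE

variable {K₁ : 𝒯}

theorem mono (hK : AttachCostLE G t K r) (hrs : r ≤ s) : AttachCostLE G t K s :=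
  fun _ _ _ f g h hT hA => (hK f g h hT hA).mono (by linarith)

theorem of_retract (hK : AttachCostLE G t K s) (e : Retract K₁ K) : AttachCostLE G t K₁ s := by
  intro A B r f g h hT hA
  obtain ⟨B', f', g', hT'⟩ := distinguished_cocone_triangle₂ (e.r ≫ h)
  obtain ⟨e', -⟩ := exists_retract_middle hT hT' (Retract.refl A) e (by simp) (by simp)
  exact (hK f' g' _ hT' hA).of_retract e'

theorem of_isZero (hK : IsZero K) : AttachCostLE G t K 0 := by
  intro A B r f g h hT hA
  obtain ⟨i, hi⟩ : ∃ i : B ⟶ A, 𝟙 B = i ≫ f :=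
    Triangle.coyoneda_exact₂ _ hT (𝟙 B) (hK.eq_of_tgt _ _)
  rw [add_zero]
  exact hA.of_retract ⟨i, f, hi.symm⟩

theorem shift_self (n : ℤ) : AttachCostLE G t (G⟦n⟧) (Real.exp (n * t)) := by
  intro A B r f g h hT ⟨A', r', hr', hA', ⟨e⟩⟩
  obtain ⟨B', f', g', hT'⟩ := distinguished_cocone_triangle₂ (h ≫ e.i⟦(1 : ℤ)⟧')
  obtain ⟨e', -⟩ := exists_retract_middle hT hT' e (Retract.refl _) (by simp)
    (by simp [← Functor.map_comp])
  exact ⟨B', _, by gcongr, .step A' B' n r' f' g' _ hT' hA', ⟨e'⟩⟩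

theorem costLE (hK : AttachCostLE G t K s) : CostLE G t K s := by
  simpa using hK _ _ _ (contractible_distinguished₁ K) (.of_isZero (isZero_zero 𝒯))

end AttachCostLE

theorem CostLE.self : CostLE G t G 1 := by
  have e : G ≅ G⟦(0 : ℤ)⟧ := ((shiftFunctorZero 𝒯 ℤ).app G).symm
  simpa using (AttachCostLE.shift_self 0).costLE.of_retract (.ofIso e)

theorem CostLE.biprod (hF : CostLE G t F r) (hF' : CostLE G t F' s) :
    CostLE G t (F ⊞ F') (r + s) := by
  obtain ⟨B, s', hs', hB, ⟨e⟩⟩ := hF'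
  suffices CostLE G t (F ⊞ B) (r + s') from
    (this.mono (by gcongr)).of_retract ⟨biprod.map (𝟙 F) e.i, biprod.map (𝟙 F) e.r, by
      apply biprod.hom_ext' <;> simp⟩
  clear hs' e
  induction hB with
  | zero Z hZ =>
    rw [add_zero]
    exact hF.of_retract ⟨biprod.fst, biprod.inl, by
      apply biprod.hom_ext'
      · simp
      · exact hZ.eq_of_src _ _⟩
  | step A B n s f g h hT _ ih =>
    obtain ⟨Y, f', g', h', hT', ⟨e⟩⟩ := exists_triangle_biprod hT F
    rw [← add_assoc]
    exact (AttachCostLE.shift_self n f' g' h' hT' ih).of_retract e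

namespace AttachCostLE

theorem of_distTriang {T : Triangle 𝒯} (hT : T ∈ distTriang 𝒯) (h₁ : AttachCostLE G t T.obj₁ r)
    (h₃ : AttachCostLE G t T.obj₃ s) : AttachCostLE G t T.obj₂ (2 * (r + s)) := by
  intro A B a f g h hB hA
  obtain ⟨B₁, f₁, g₁, hB₁⟩ := distinguished_cocone_triangle₂ (T.mor₁ ≫ h)
  obtain ⟨V, q, k, v, hV, ⟨e⟩⟩ := exists_triangle_retract_biprod hT hB hB₁
  have costV : CostLE G t V (a + r + s) := h₃ q k v hV (h₁ f₁ g₁ _ hB₁ hA)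
  have costK : CostLE G t T.obj₂ (r + s) := h₃ _ _ _ hT h₁.costLE
  exact ((costV.biprod costK).of_retract e).mono (by linarith)

theorem exists_forall_shift_of_buildVal (hF : BuildVal 𝒯 G 0 F r) :
    ∃ s : ℝ, 0 ≤ s ∧ ∀ n : ℤ, AttachCostLE G t (F⟦n⟧) (s * Real.exp (n * t)) := by
  induction hF with
  | zero Z hZ =>
    refine ⟨0, le_rfl, fun n => ?_⟩
    rw [zero_mul]
    exact of_isZero ((shiftFunctor 𝒯 n).map_isZero hZ)
  | step A B m _ f g h hT _ ih =>
    obtain ⟨s, hs, hA'⟩ := ih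
    refine ⟨2 * (s + Real.exp (m * t)), by positivity, fun n => ?_⟩
    have hG : AttachCostLE G t ((G⟦m⟧)⟦n⟧) (Real.exp ((m + n : ℤ) * t)) :=
      (shift_self (m + n)).of_retract (.ofIso ((shiftFunctorAdd 𝒯 m n).app G).symm)
    refine (of_distTriang (Triangle.shift_distinguished _ hT n) (hA' n) hG).mono (le_of_eq ?_)
    rw [Int.cast_add, add_mul, Real.exp_add]
    ring

theorem exists_forall_shift (hG : IsSplitGenerator 𝒯 G) (F : 𝒯) (t : ℝ) :
    ∃ s : ℝ, 0 ≤ s ∧ ∀ n : ℤ, AttachCostLE G t (F⟦n⟧) (s * Real.exp (n * t)) := by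
  obtain ⟨r, B, F', hB, ⟨e⟩⟩ := hG F
  obtain ⟨s, hs, hB'⟩ := exists_forall_shift_of_buildVal (t := t) hB
  have eF : Retract F B := ⟨biprod.inl ≫ e.inv, e.hom ≫ biprod.fst, by simp⟩
  exact ⟨s, hs, fun n => (hB' n).of_retract (eF.map (shiftFunctor 𝒯 n))⟩

theorem biproduct {k : ℕ} {K : Fin k → 𝒯} {s : Fin k → ℝ} (hs : ∀ i, 0 ≤ s i)
    (hK : ∀ i, AttachCostLE G t (K i) (s i)) :
    AttachCostLE G t (⨁ K) (2 ^ k * ∑ i, s i) := by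
  induction k with
  | zero =>
    have : IsZero (⨁ K) := by
      rw [IsZero.iff_id_eq_zero]
      exact biproduct.hom_ext _ _ fun j => j.elim0
    simpa using of_isZero this
  | succ k ih =>
    have htail := ih (fun i => hs i.succ) (fun i => hK i.succ)
    have e : Retract (⨁ K) (K 0 ⊞ ⨁ fun i : Fin k => K i.succ) :=
      ⟨biprod.lift (biproduct.π K 0) (biproduct.lift fun i => biproduct.π K i.succ),
        biprod.desc (biproduct.ι K 0) (biproduct.desc fun i => biproduct.ι K i.succ), by
          rw [biprod.lift_desc, biproduct.lift_desc, ← biproduct.total, Fin.sum_univ_succ]⟩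
    refine ((of_distTriang (binaryBiproductTriangle_distinguished _ _) (hK 0) htail).of_retract
      e).mono ?_
    calc 2 * (s 0 + 2 ^ k * ∑ i : Fin k, s i.succ)
        ≤ 2 * (2 ^ k * s 0 + 2 ^ k * ∑ i : Fin k, s i.succ) := by
          gcongr
          exact le_mul_of_one_le_left (hs 0) (one_le_pow₀ one_le_two)
      _ = 2 ^ (k + 1) * ∑ i, s i := by rw [Fin.sum_univ_succ, pow_succ]; ring

end AttachCostLE

end Triangles

section Bricks

variable {𝒯 𝒮 : Type*} [Category 𝒯] [Preadditive 𝒯] [Category 𝒮] [Preadditive 𝒮]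

/-- A brick is a nonzero object whose nonzero endomorphisms are all invertible. -/
def IsBrick (L : 𝒯) : Prop := ∀ f : L ⟶ L, IsIso f ↔ f ≠ 0

namespace IsBrick

variable {L L' : 𝒯}

theorem id_ne_zero (hL : IsBrick L) : 𝟙 L ≠ 0 := (hL _).1 inferInstance

theorem of_iso (hL : IsBrick L) (e : L ≅ L') : IsBrick L' := by
  intro f
  have hf : f = e.inv ≫ (e.hom ≫ f ≫ e.inv) ≫ e.hom := by simp
  constructor
  · intro _ hf₀
    exact (hL (e.hom ≫ f ≫ e.inv)).1 inferInstance (by simp [hf₀])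
  · intro hf₀
    have := (hL (e.hom ≫ f ≫ e.inv)).2 fun h₀ => hf₀ (by rw [hf, h₀]; simp)
    rw [hf]
    infer_instance

theorem isIso_of_ne_zero (hL : IsBrick L) (e : L ≅ L') {f : L ⟶ L'} (hf : f ≠ 0) : IsIso f := by
  have : IsIso (f ≫ e.inv) := (hL _).2 fun h => hf ((cancel_mono e.inv).1 (h.trans zero_comp.symm))
  exact IsIso.of_isIso_comp_right f e.inv

theorem nonempty_iso_of_retract (hL' : IsBrick L') (e : Retract L L') (hL : 𝟙 L ≠ 0) :
    Nonempty (L ≅ L') := by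
  have : IsIso (e.r ≫ e.i) := (hL' _).2 fun h => hL <|
    calc 𝟙 L = (e.i ≫ e.r) ≫ e.i ≫ e.r := by rw [e.retract, Category.id_comp]
      _ = e.i ≫ (e.r ≫ e.i) ≫ e.r := by simp only [Category.assoc]
      _ = 0 := by rw [h, zero_comp, comp_zero]
  have : Epi e.i := epi_of_epi e.r e.i
  have : IsSplitMono e.i := ⟨⟨e.r, e.retract⟩⟩
  have : IsIso e.i := isIso_of_epi_of_isSplitMono e.i
  exact ⟨asIso e.i⟩

theorem map (hL : IsBrick L) (Φ : 𝒯 ⥤ 𝒮) [Φ.Full] [Φ.Faithful] [Φ.PreservesZeroMorphisms] :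
    IsBrick (Φ.obj L) := by
  intro f
  obtain ⟨g, rfl⟩ := Φ.map_surjective f
  rw [isIso_iff_of_reflects_iso, hL g, ne_eq, ne_eq, Φ.map_eq_zero_iff]

variable (𝕜 : Type*) [Field 𝕜] [CategoryTheory.Linear 𝕜 𝒯]

theorem of_finrank_eq_one (h : Module.finrank 𝕜 (L ⟶ L) = 1) : IsBrick L := by
  have := Module.nontrivial_of_finrank_eq_succ h
  have hid : 𝟙 L ≠ 0 := fun h₀ => not_subsingleton (L ⟶ L)
    ⟨fun f g => by rw [← Category.comp_id f, ← Category.comp_id g, h₀, comp_zero, comp_zero]⟩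
  intro f
  refine ⟨fun _ hf => hid ?_, fun hf => ?_⟩
  · exact ((isIsoZeroEquiv L L) (hf ▸ inferInstance)).1
  · obtain ⟨c, rfl⟩ := exists_smul_eq_of_finrank_eq_one h hid f
    have hc : c ≠ 0 := fun hc => hf (by rw [hc, zero_smul])
    exact ⟨c⁻¹ • 𝟙 L, by simp [smul_smul, hc], by simp [smul_smul, hc]⟩

variable [IsAlgClosed 𝕜] [CategoryTheory.Linear 𝕜 𝒮]

theorem smul_id_bijective (hL : IsBrick L) [FiniteDimensional 𝕜 (L ⟶ L)] :
    Function.Bijective fun c : 𝕜 => c • 𝟙 L :=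
  ⟨smul_left_injective 𝕜 hL.id_ne_zero,
    exists_smul_eq_of_finrank_eq_one (finrank_endomorphism_eq_one 𝕜 hL) hL.id_ne_zero⟩

/-- `Φ` may fail to be linear, but it maps the scalars `End L = 𝕜` onto `End (Φ L) = 𝕜`, so it is
semilinear on `Hom(L, F)`. -/
theorem finrank_map_hom (hL : IsBrick L) (Φ : 𝒯 ⥤ 𝒮) [Φ.Full] [Φ.Faithful] [Φ.Additive]
    [FiniteDimensional 𝕜 (L ⟶ L)] [FiniteDimensional 𝕜 (Φ.obj L ⟶ Φ.obj L)] (F : 𝒯) :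
    Module.finrank 𝕜 (Φ.obj L ⟶ Φ.obj F) = Module.finrank 𝕜 (L ⟶ F) := by
  let scalarEnd : 𝕜 ≃ (L ⟶ L) := Equiv.ofBijective _ (hL.smul_id_bijective 𝕜)
  let scalarEnd' : 𝕜 ≃ (Φ.obj L ⟶ Φ.obj L) :=
    Equiv.ofBijective _ ((hL.map Φ).smul_id_bijective 𝕜)
  let mapEnd : (L ⟶ L) ≃ (Φ.obj L ⟶ Φ.obj L) :=
    Equiv.ofBijective Φ.map ⟨Φ.map_injective, Φ.map_surjective⟩
  let mapHom : (L ⟶ F) ≃+ (Φ.obj L ⟶ Φ.obj F) :=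
    AddEquiv.ofBijective Φ.mapAddHom ⟨Φ.map_injective, Φ.map_surjective⟩
  let σ : 𝕜 ≃ 𝕜 := (scalarEnd.trans mapEnd).trans scalarEnd'.symm
  have hσ (c : 𝕜) : σ c • 𝟙 (Φ.obj L) = Φ.map (c • 𝟙 L) :=
    scalarEnd'.apply_symm_apply (Φ.map (c • 𝟙 L))
  have hmap (c : 𝕜) (f : L ⟶ F) : mapHom (c • f) = σ c • mapHom f :=
    calc Φ.map (c • f) = Φ.map (c • 𝟙 L) ≫ Φ.map f := by
          rw [← Φ.map_comp, Linear.smul_comp, Category.id_comp]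
      _ = σ c • Φ.map f := by rw [← hσ, Linear.smul_comp, Category.id_comp]
  simpa [Module.finrank] using
    congrArg Cardinal.toNat (lift_rank_eq_of_equiv_equiv σ mapHom σ.bijective hmap).symm

end IsBrick

end Bricks

section HomDim

variable (𝕜 : Type*) [Field 𝕜] {𝒯 : Type*} [Category 𝒯] [Preadditive 𝒯]
  [CategoryTheory.Linear 𝕜 𝒯] [HasShift 𝒯 ℤ]

/-- The dimension of `Homⁿ(E, F) = Hom(E, F⟦n⟧)`. -/
noncomputable def homDim (E : 𝒯) (n : ℤ) (F : 𝒯) : ℕ := Module.finrank 𝕜 (E ⟶ F⟦n⟧)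

variable {E E' F F' : 𝒯} {n : ℤ}

theorem homDim_congr (e : E ≅ E') (e' : F ≅ F') (n : ℤ) : homDim 𝕜 E n F = homDim 𝕜 E' n F' :=
  (Linear.homCongr 𝕜 e ((shiftFunctor 𝒯 n).mapIso e')).finrank_eq

theorem homDim_zero (E F : 𝒯) : homDim 𝕜 E 0 F = Module.finrank 𝕜 (E ⟶ F) :=
  (Linear.homCongr 𝕜 (Iso.refl E) ((shiftFunctorZero 𝒯 ℤ).app F)).finrank_eq

theorem homDim_shift_target (E F : 𝒯) (n m : ℤ) :
    homDim 𝕜 E n (F⟦m⟧) = homDim 𝕜 E (m + n) F :=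
  (Linear.homCongr 𝕜 (Iso.refl E) ((shiftFunctorAdd 𝒯 m n).app F).symm).finrank_eq

theorem homDim_eq_zero_iff [FiniteDimensional 𝕜 (E ⟶ F⟦n⟧)] :
    homDim 𝕜 E n F = 0 ↔ ∀ f : E ⟶ F⟦n⟧, f = 0 := by
  rw [homDim, Module.finrank_zero_iff]
  exact ⟨fun _ _ => Subsingleton.elim _ _, fun h => ⟨fun f g => (h f).trans (h g).symm⟩⟩

variable [∀ X Y : 𝒯, FiniteDimensional 𝕜 (X ⟶ Y)]

theorem homDim_le_of_retract (e : Retract F F') (E : 𝒯) (n : ℤ) :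
    homDim 𝕜 E n F ≤ homDim 𝕜 E n F' := by
  have e' := e.map (shiftFunctor 𝒯 n)
  have hinj : Function.Injective (Linear.rightComp 𝕜 E e'.i) :=
    fun f g hfg => (cancel_mono e'.i).1 hfg
  exact LinearMap.finrank_le_finrank_of_injective hinj

theorem homDim_map [IsAlgClosed 𝕜] (hE : IsBrick E) (Φ : 𝒯 ⥤ 𝒯) [Φ.Full] [Φ.Faithful]
    [Φ.Additive] [Φ.CommShift ℤ] (n : ℤ) (F : 𝒯) :
    homDim 𝕜 (Φ.obj E) n (Φ.obj F) = homDim 𝕜 E n F := by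
  rw [homDim, homDim, ← hE.finrank_map_hom 𝕜 Φ]
  exact (Linear.homCongr 𝕜 (Iso.refl _) ((Φ.commShiftIso n).app F).symm).finrank_eq

section Additive

variable [∀ n : ℤ, (shiftFunctor 𝒯 n).Additive]

theorem homDim_of_isZero (hF : IsZero F) (E : 𝒯) (n : ℤ) : homDim 𝕜 E n F = 0 :=
  (homDim_eq_zero_iff 𝕜).2 fun f => ((shiftFunctor 𝒯 n).map_isZero hF).eq_of_tgt f 0

theorem homDim_shift_source [IsAlgClosed 𝕜] (hE : IsBrick E) (u n : ℤ) (F : 𝒯) :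
    homDim 𝕜 (E⟦u⟧) n F = homDim 𝕜 E (n - u) F := by
  rw [homDim, homDim, ← hE.finrank_map_hom 𝕜 (shiftFunctor 𝒯 u)]
  exact (Linear.homCongr 𝕜 (Iso.refl _)
    ((shiftFunctorAdd' 𝒯 (n - u) u n (by ring)).app F)).finrank_eq

theorem homDim_biproduct {k : ℕ} (E : 𝒯) (n : ℤ) (K : Fin k → 𝒯) [HasFiniteBiproducts 𝒯] :
    homDim 𝕜 E n (⨁ K) = ∑ i, homDim 𝕜 E n (K i) := by
  let φ : (E ⟶ (⨁ K)⟦n⟧) ≃ₗ[𝕜] ∀ i, E ⟶ (K i)⟦n⟧ :=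
    { toFun f i := f ≫ (biproduct.π K i)⟦n⟧'
      invFun g := ∑ i, g i ≫ (biproduct.ι K i)⟦n⟧'
      map_add' f g := funext fun i => Preadditive.add_comp ..
      map_smul' c f := funext fun i => Linear.smul_comp ..
      left_inv f := by
        simp only [Category.assoc, ← Functor.map_comp, ← Preadditive.comp_sum, ← Functor.map_sum,
          biproduct.total, CategoryTheory.Functor.map_id, Category.comp_id]
      right_inv g := by
        ext i
        simp [Preadditive.sum_comp, ← Functor.map_comp, biproduct.ι_π, apply_dite] }
  exact φ.finrank_eq.trans (Module.finrank_pi_fintype 𝕜)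

theorem homDim_obj₂_le [HasZeroObject 𝒯] [Pretriangulated 𝒯] {T : Triangle 𝒯}
    (hT : T ∈ distTriang 𝒯) (E : 𝒯) (n : ℤ) :
    homDim 𝕜 E n T.obj₂ ≤ homDim 𝕜 E n T.obj₁ + homDim 𝕜 E n T.obj₃ := by
  let S := (shiftFunctor (Triangle 𝒯) n).obj T
  have hS : S ∈ distTriang 𝒯 := Triangle.shift_distinguished T hT n
  let φ : (E ⟶ S.obj₁) →ₗ[𝕜] (E ⟶ S.obj₂) := Linear.rightComp 𝕜 E S.mor₁
  let ψ : (E ⟶ S.obj₂) →ₗ[𝕜] (E ⟶ S.obj₃) := Linear.rightComp 𝕜 E S.mor₂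
  have hker : LinearMap.ker ψ ≤ LinearMap.range φ := by
    intro f hf
    obtain ⟨g, hg⟩ := Triangle.coyoneda_exact₂ S hS f hf
    exact ⟨g, hg.symm⟩
  calc homDim 𝕜 E n T.obj₂
      = Module.finrank 𝕜 (LinearMap.ker ψ) + Module.finrank 𝕜 (LinearMap.range ψ) :=
        (add_comm _ _).trans ψ.finrank_range_add_finrank_ker |>.symm
    _ ≤ homDim 𝕜 E n T.obj₁ + homDim 𝕜 E n T.obj₃ :=
        add_le_add ((Submodule.finrank_mono hker).trans φ.finrank_range_le)
          (Submodule.finrank_le _)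

end Additive

end HomDim

section ShiftBiproduct

variable {𝒯 : Type*} [Category 𝒯] [Preadditive 𝒯] [HasShift 𝒯 ℤ]
  [∀ n : ℤ, (shiftFunctor 𝒯 n).Additive] [HasFiniteBiproducts 𝒯]

theorem nonempty_shift_iso_biproduct {E Y : 𝒯} {k : ℕ} {us : Fin k → ℤ}
    (e : Y ≅ ⨁ fun i => E⟦us i⟧) (n : ℤ) : Nonempty (Y⟦n⟧ ≅ ⨁ fun i => E⟦us i + n⟧) :=
  ⟨(shiftFunctor 𝒯 n).mapIso e ≪≫ (shiftFunctor 𝒯 n).mapBiproduct _ ≪≫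
    biproduct.mapIso fun i => ((shiftFunctorAdd 𝒯 (us i) n).app E).symm⟩

end ShiftBiproduct

section HomSeries

variable (𝕜 : Type*) [Field 𝕜] {𝒯 : Type*} [Category 𝒯] [Preadditive 𝒯]
  [CategoryTheory.Linear 𝕜 𝒯] [HasShift 𝒯 ℤ]

/-- The Poincaré series `∑ₙ dim Homⁿ(E, F) e^{-nt}` of `Hom^*(E, F)`, which bounds the complexity
of `F` from below. The signs are such that `F⟦1⟧` has weight `e^t`, as in `complexity`, and the
series takes values in `ENNReal` so that it needs no convergence hypotheses. -/
noncomputable def homSeries (E : 𝒯) (t : ℝ) (F : 𝒯) : ENNReal :=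
  ∑' n : ℤ, homDim 𝕜 E n F * ENNReal.ofReal (Real.exp (-n * t))

variable {E F F' : 𝒯} {t : ℝ}

theorem homSeries_eq_zero_iff : homSeries 𝕜 E t F = 0 ↔ ∀ n, homDim 𝕜 E n F = 0 := by
  simp [homSeries, ENNReal.tsum_eq_zero, (Real.exp_pos _).not_ge]

theorem homSeries_of_homDim_eq_sub {m : ℤ}
    (h : ∀ n, homDim 𝕜 E n F' = homDim 𝕜 E (n - m) F) :
    homSeries 𝕜 E t F' = ENNReal.ofReal (Real.exp (-m * t)) * homSeries 𝕜 E t F := by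
  rw [homSeries, homSeries, ← ENNReal.tsum_mul_left, ← (Equiv.addRight m).tsum_eq]
  refine tsum_congr fun n => ?_
  have hexp : Real.exp (-(n + m : ℤ) * t) = Real.exp (-m * t) * Real.exp (-n * t) := by
    rw [← Real.exp_add]
    push_cast
    ring_nf
  rw [Equiv.coe_addRight, h, add_sub_cancel_right, hexp, ENNReal.ofReal_mul (Real.exp_pos _).le]
  ring

theorem homSeries_shift (E F : 𝒯) (t : ℝ) (m : ℤ) :
    homSeries 𝕜 E t (F⟦m⟧) = ENNReal.ofReal (Real.exp (m * t)) * homSeries 𝕜 E t F := by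
  rw [homSeries_of_homDim_eq_sub 𝕜 (m := -m) fun n => ?_, Int.cast_neg, neg_neg]
  rw [homDim_shift_target, sub_neg_eq_add, add_comm]

theorem homSeries_eq_ofReal_sum {k : ℕ} {ns : Fin k → ℤ}
    (hns : ∀ n, (Finset.univ.filter fun i => ns i = -n).card = homDim 𝕜 E n F) (t : ℝ) :
    homSeries 𝕜 E t F = ENNReal.ofReal (∑ i, Real.exp (ns i * t)) := by
  have hterm (n : ℤ) : (homDim 𝕜 E n F : ENNReal) * ENNReal.ofReal (Real.exp (-n * t)) =
      ∑ i, if n = -ns i then ENNReal.ofReal (Real.exp (-n * t)) else 0 := by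
    rw [← hns, Finset.sum_ite, Finset.sum_const, Finset.sum_const_zero, add_zero, nsmul_eq_mul]
    simp only [eq_neg_iff_add_eq_zero, add_comm n]
  rw [homSeries, tsum_congr hterm, Summable.tsum_finsetSum fun _ _ => ENNReal.summable,
    ENNReal.ofReal_sum_of_nonneg fun _ _ => (Real.exp_pos _).le]
  refine Finset.sum_congr rfl fun i _ => ?_
  rw [tsum_ite_eq, Int.cast_neg, neg_neg]

variable [∀ X Y : 𝒯, FiniteDimensional 𝕜 (X ⟶ Y)]

theorem homSeries_le_of_retract (e : Retract F F') : homSeries 𝕜 E t F ≤ homSeries 𝕜 E t F' :=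
  ENNReal.tsum_le_tsum fun n => by gcongr; exact homDim_le_of_retract 𝕜 e E n

section Pretriangulated

variable [HasZeroObject 𝒯] [∀ n : ℤ, (shiftFunctor 𝒯 n).Additive] [Pretriangulated 𝒯]

theorem homSeries_obj₂_le {T : Triangle 𝒯} (hT : T ∈ distTriang 𝒯) (E : 𝒯) (t : ℝ) :
    homSeries 𝕜 E t T.obj₂ ≤ homSeries 𝕜 E t T.obj₁ + homSeries 𝕜 E t T.obj₃ := by
  rw [homSeries, homSeries, homSeries, ← ENNReal.tsum_add]
  refine ENNReal.tsum_le_tsum fun n => ?_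
  rw [← add_mul]
  gcongr
  exact_mod_cast homDim_obj₂_le 𝕜 hT E n

variable {G : 𝒯} {r : ℝ}

theorem homSeries_le_of_buildVal (hF : BuildVal 𝒯 G t F r) (E : 𝒯) :
    homSeries 𝕜 E t F ≤ ENNReal.ofReal r * homSeries 𝕜 E t G := by
  induction hF with
  | zero Z hZ =>
    rw [(homSeries_eq_zero_iff 𝕜).2 (homDim_of_isZero 𝕜 hZ E)]
    exact zero_le
  | step A B n r f g h hT hA ih =>
    calc homSeries 𝕜 E t B
        ≤ homSeries 𝕜 E t A + homSeries 𝕜 E t (G⟦n⟧) := homSeries_obj₂_le 𝕜 hT E t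
      _ ≤ ENNReal.ofReal (r + Real.exp (n * t)) * homSeries 𝕜 E t G := by
        rw [homSeries_shift, ENNReal.ofReal_add (buildVal_nonneg hA) (Real.exp_pos _).le, add_mul]
        gcongr

theorem homSeries_le_of_mem_complexitySet (hr : r ∈ complexitySet 𝒯 G F t) (E : 𝒯) :
    homSeries 𝕜 E t F ≤ ENNReal.ofReal r * homSeries 𝕜 E t G := by
  obtain ⟨B, F', hB, ⟨e⟩⟩ := hr
  have eF : Retract F B := ⟨biprod.inl ≫ e.inv, e.hom ≫ biprod.fst, by simp⟩
  exact (homSeries_le_of_retract 𝕜 eF).trans (homSeries_le_of_buildVal 𝕜 hB E)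

theorem homSeries_ne_zero (hG : IsSplitGenerator 𝒯 G) (hE : ¬ IsZero E) (t : ℝ) :
    homSeries 𝕜 E t G ≠ 0 := by
  intro h
  obtain ⟨r, hr⟩ := hG E
  have hEE : homSeries 𝕜 E 0 E = 0 := by
    have hle := homSeries_le_of_mem_complexitySet 𝕜 hr E
    rwa [(homSeries_eq_zero_iff 𝕜).2 ((homSeries_eq_zero_iff 𝕜).1 h), mul_zero,
      nonpos_iff_eq_zero] at hle
  have hEnd : Module.finrank 𝕜 (E ⟶ E) = 0 :=
    (homDim_zero 𝕜 E E).symm.trans ((homSeries_eq_zero_iff 𝕜).1 hEE 0)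
  have : Subsingleton (E ⟶ E) := Module.finrank_zero_iff.1 hEnd
  exact hE ((IsZero.iff_id_eq_zero E).2 (Subsingleton.elim _ _))

end Pretriangulated

end HomSeries

theorem tendsto_log_div_of_pow_le_of_le {q c : ℝ} (hq : 0 < q) (hc : 0 ≤ c) {f : ℕ → ℝ}
    (hlower : ∀ n, q ^ n ≤ f n) (hupper : ∀ n : ℕ, f n ≤ (1 + n * c) * q ^ n) :
    Tendsto (fun n : ℕ => Real.log (f n) / n) atTop (nhds (Real.log q)) := by
  have hlim : Tendsto (fun n : ℕ => Real.log (1 + c) / n + Real.log n / n + Real.log q) atTop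
      (nhds (Real.log q)) := by
    simpa using ((tendsto_const_div_atTop_nhds_zero_nat _).add
      (Real.isLittleO_log_id_atTop.tendsto_div_nhds_zero.comp
        tendsto_natCast_atTop_atTop)).add_const (Real.log q)
  refine tendsto_of_tendsto_of_tendsto_of_le_of_le' tendsto_const_nhds hlim ?_ ?_ <;>
    filter_upwards [eventually_gt_atTop 0] with n hn <;>
    have hn' : (1 : ℝ) ≤ n := Nat.one_le_cast.2 hn
  · rw [le_div_iff₀ (by positivity), mul_comm, ← Real.log_pow]
    exact Real.log_le_log (by positivity) (hlower n)
  · have hf : f n ≤ (1 + c) * n * q ^ n :=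
      (hupper n).trans (by gcongr; linarith)
    calc Real.log (f n) / n ≤ Real.log ((1 + c) * n * q ^ n) / n := by
          gcongr
          exact (pow_pos hq n).trans_le (hlower n)
      _ = Real.log (1 + c) / n + Real.log n / n + Real.log q := by
        rw [Real.log_mul (by positivity) (by positivity),
          Real.log_mul (by positivity) (by positivity), Real.log_pow]
        field_simp

end CategoricalEntropy

namespace PdObject

open CategoricalEntropy

variable {𝒯 : Type*} [Category 𝒯] [Preadditive 𝒯] [HasShift 𝒯 ℤ] [CategoryTheory.Linear ℂ 𝒯]
  {d : ℕ} (o : PdObject 𝒯 d)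

theorem homDim_self_two_mul {k : ℕ} (hk : k ≤ d) : homDim ℂ o.E (2 * k) o.E = 1 :=
  o.hom_rank_one k hk

theorem homDim_self_eq_zero {n : ℤ} (hn : ¬ ∃ k : ℕ, k ≤ d ∧ n = 2 * k) :
    homDim ℂ o.E n o.E = 0 := by
  have : Subsingleton (o.E ⟶ o.E⟦n⟧) :=
    ⟨fun f g => (o.hom_rank_zero n hn f).trans (o.hom_rank_zero n hn g).symm⟩
  exact Module.finrank_zero_of_subsingleton

theorem homDim_self_ne_zero_iff {n : ℤ} :
    homDim ℂ o.E n o.E ≠ 0 ↔ ∃ k : ℕ, k ≤ d ∧ n = 2 * k := by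
  refine ⟨fun h => not_not.1 (mt o.homDim_self_eq_zero h), ?_⟩
  rintro ⟨k, hk, rfl⟩
  rw [o.homDim_self_two_mul hk]
  exact one_ne_zero

theorem isBrick : IsBrick o.E := by
  have hdim : Module.finrank ℂ (o.E ⟶ o.E) = 1 := by
    rw [← homDim_zero]
    exact o.homDim_self_two_mul (Nat.zero_le d)
  exact .of_finrank_eq_one ℂ hdim

theorem exists_hpow_add_eq_comp (a b : ℕ) :
    ∃ γ : o.E⟦2 * (a : ℤ)⟧ ⟶ o.E⟦2 * ((a + b : ℕ) : ℤ)⟧, o.hpow (a + b) = o.hpow a ≫ γ := by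
  suffices ∀ c, a + b = c → ∃ γ : o.E⟦2 * (a : ℤ)⟧ ⟶ o.E⟦2 * (c : ℤ)⟧,
      o.hpow c = o.hpow a ≫ γ from this _ rfl
  induction a with
  | zero =>
    exact fun c _ => ⟨(shiftFunctorZero' 𝒯 (2 * ((0 : ℕ) : ℤ)) (by simp)).hom.app o.E ≫ o.hpow c,
      by simp [o.hpow_zero]⟩
  | succ a ih =>
    rintro _ rfl
    obtain ⟨γ, hγ⟩ := ih (a + b) rfl
    rw [show a + 1 + b = a + b + 1 by ring, o.hpow_succ, o.hpow_succ, hγ]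
    refine ⟨(shiftFunctorAdd' 𝒯 (2 * (a : ℤ)) 2 (2 * ((a + 1 : ℕ) : ℤ))
        (by push_cast; ring)).hom.app o.E ≫ γ⟦(2 : ℤ)⟧' ≫
      (shiftFunctorAdd' 𝒯 (2 * ((a + b : ℕ) : ℤ)) 2 (2 * ((a + b + 1 : ℕ) : ℤ))
        (by push_cast; ring)).inv.app o.E, ?_⟩
    simp

section Shifts

variable [∀ n : ℤ, (shiftFunctor 𝒯 n).Additive] {u u' v w : ℤ}

theorem exists_comp_ne_zero {a b : ℕ} (hab : a + b ≤ d) (huv : v - u = 2 * a)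
    (hvw : w - v = 2 * b) : ∃ (f : o.E⟦u⟧ ⟶ o.E⟦v⟧) (g : o.E⟦v⟧ ⟶ o.E⟦w⟧), f ≫ g ≠ 0 := by
  obtain ⟨γ, hγ⟩ := o.exists_hpow_add_eq_comp a b
  let ev : o.E⟦v⟧ ≅ (o.E⟦2 * (a : ℤ)⟧)⟦u⟧ :=
    (shiftFunctorAdd' 𝒯 (2 * (a : ℤ)) u v (by omega)).app o.E
  let ew : o.E⟦w⟧ ≅ (o.E⟦2 * ((a + b : ℕ) : ℤ)⟧)⟦u⟧ :=
    (shiftFunctorAdd' 𝒯 (2 * ((a + b : ℕ) : ℤ)) u w (by push_cast; omega)).app o.E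
  refine ⟨(o.hpow a)⟦u⟧' ≫ ev.inv, ev.hom ≫ γ⟦u⟧' ≫ ew.inv, fun h => o.hpow_ne_zero _ hab ?_⟩
  rw [hγ, ← (shiftFunctor 𝒯 u).map_eq_zero_iff, Functor.map_comp, ← cancel_mono ew.inv,
    zero_comp]
  simpa using h

variable [∀ X Y : 𝒯, FiniteDimensional ℂ (X ⟶ Y)]

theorem exists_sub_eq_two_mul {f : o.E⟦u⟧ ⟶ o.E⟦v⟧} (hf : f ≠ 0) :
    ∃ k : ℕ, k ≤ d ∧ v - u = 2 * k := by
  by_contra h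
  refine hf ((homDim_eq_zero_iff ℂ).1 ?_ f)
  rw [homDim_shift_source ℂ o.isBrick, o.homDim_self_eq_zero h]

theorem exists_smul_eq {f : o.E⟦u⟧ ⟶ o.E⟦v⟧} (hf : f ≠ 0) (g : o.E⟦u⟧ ⟶ o.E⟦v⟧) :
    ∃ c : ℂ, c • f = g := by
  obtain ⟨k, hk, huv⟩ := o.exists_sub_eq_two_mul hf
  refine exists_smul_eq_of_finrank_eq_one ?_ hf g
  rw [← o.homDim_self_two_mul hk, ← huv, ← homDim_shift_source ℂ o.isBrick]
  rfl

theorem exists_comp_eq {β : o.E⟦u⟧ ⟶ o.E⟦v⟧} (hβ : β ≠ 0) (β' : o.E⟦u'⟧ ⟶ o.E⟦v⟧)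
    (hu : u' ≤ u) : ∃ c : o.E⟦u'⟧ ⟶ o.E⟦u⟧, c ≫ β = β' := by
  by_cases hβ' : β' = 0
  · exact ⟨0, by rw [hβ', zero_comp]⟩
  obtain ⟨k, -, hk⟩ := o.exists_sub_eq_two_mul hβ
  obtain ⟨k', hk'd, hk'⟩ := o.exists_sub_eq_two_mul hβ'
  obtain ⟨f, g, hfg⟩ : ∃ (f : o.E⟦u'⟧ ⟶ o.E⟦u⟧) (g : o.E⟦u⟧ ⟶ o.E⟦v⟧), f ≫ g ≠ 0 :=
    o.exists_comp_ne_zero (a := k' - k) (b := k) (by omega) (by omega) hk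
  obtain ⟨x, rfl⟩ := o.exists_smul_eq hβ g
  have hfβ : f ≫ β ≠ 0 := fun h => hfg (by rw [Linear.comp_smul, h, smul_zero])
  obtain ⟨y, hy⟩ := o.exists_smul_eq hfβ β'
  exact ⟨y • f, by rw [Linear.smul_comp, hy]⟩

/-- Among the nonzero entries of a column, the one with the largest shift divides all the others,
so it can serve as the pivot of Gaussian elimination. -/
theorem exists_pivot {α : Type*} {u : α → ℤ} {I : Finset α} {b : ∀ i, o.E⟦u i⟧ ⟶ o.E⟦v⟧}
    (hb : ∃ i ∈ I, b i ≠ 0) :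
    ∃ p ∈ I, ∃ m : ∀ i, o.E⟦u i⟧ ⟶ o.E⟦u p⟧, ∀ i ∈ I, m i ≫ b p = b i := by
  classical
  obtain ⟨p, hp, hmax⟩ := (I.filter fun i => b i ≠ 0).exists_max_image u
    (by simpa [Finset.Nonempty] using hb)
  obtain ⟨hpI, hbp⟩ := Finset.mem_filter.1 hp
  have hdvd (i : α) : ∃ m : o.E⟦u i⟧ ⟶ o.E⟦u p⟧, i ∈ I → m ≫ b p = b i := by
    by_cases hi : i ∈ I ∧ b i ≠ 0
    · obtain ⟨m, hm⟩ := o.exists_comp_eq hbp (b i) (hmax i (Finset.mem_filter.2 hi))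
      exact ⟨m, fun _ => hm⟩
    · exact ⟨0, fun hiI => by rw [zero_comp, not_not.1 (not_and.1 hi hiI)]⟩
  choose m hm using hdvd
  exact ⟨p, hpI, m, hm⟩

theorem exists_syzygy {α σ : Type*} (u : α → ℤ) (v : σ → ℤ) (I : Finset α) (S : Finset σ)
    (hSI : S.card < I.card) (b : ∀ i j, o.E⟦u i⟧ ⟶ o.E⟦v j⟧) :
    ∃ i₀ ∈ I, ∃ c : ∀ i, o.E⟦u i₀⟧ ⟶ o.E⟦u i⟧,
      c i₀ = 𝟙 _ ∧ ∀ j ∈ S, ∑ i ∈ I, c i ≫ b i j = 0 := by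
  classical
  induction S using Finset.induction_on generalizing I b with
  | empty =>
    obtain ⟨i₀, hi₀⟩ := Finset.card_pos.1 hSI
    exact ⟨i₀, hi₀, Pi.single i₀ (𝟙 _), Pi.single_eq_same _ _, by simp⟩
  | insert j S hj ih =>
    rw [Finset.card_insert_of_notMem hj] at hSI
    by_cases hb : ∀ i ∈ I, b i j = 0
    · obtain ⟨i₀, hi₀, c, hc, hcS⟩ := ih I (by omega) b
      refine ⟨i₀, hi₀, c, hc, Finset.forall_mem_insert _ _ _ |>.2 ⟨?_, hcS⟩⟩
      exact Finset.sum_eq_zero fun i hi => by rw [hb i hi, comp_zero]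
    push Not at hb
    obtain ⟨p, hpI, m, hm⟩ := o.exists_pivot hb
    obtain ⟨i₀, hi₀, c, hc, hcS⟩ := ih (I.erase p) (by rw [Finset.card_erase_of_mem hpI]; omega)
      fun i j' => b i j' - m i ≫ b p j'
    obtain ⟨hi₀p, hi₀I⟩ := Finset.mem_erase.1 hi₀
    refine ⟨i₀, hi₀I, Function.update c p (-∑ i ∈ I.erase p, c i ≫ m i), ?_, fun j' hj' => ?_⟩
    · rw [Function.update_of_ne hi₀p, hc]
    calc ∑ i ∈ I, Function.update c p (-∑ i ∈ I.erase p, c i ≫ m i) i ≫ b i j'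
        = (-∑ i ∈ I.erase p, c i ≫ m i) ≫ b p j' + ∑ i ∈ I.erase p, c i ≫ b i j' := by
          rw [← Finset.add_sum_erase I _ hpI, Function.update_self]
          congr 1
          exact Finset.sum_congr rfl fun i hi => by
            rw [Function.update_of_ne (Finset.ne_of_mem_erase hi)]
      _ = ∑ i ∈ I.erase p, c i ≫ (b i j' - m i ≫ b p j') := by
          simp only [Preadditive.neg_comp, Preadditive.sum_comp, Preadditive.comp_sub,
            Finset.sum_sub_distrib, Category.assoc, neg_add_eq_sub]
      _ = 0 := by
          obtain rfl | hj'S := Finset.mem_insert.1 hj'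
          · exact Finset.sum_eq_zero fun i hi => by
              rw [hm i (Finset.mem_of_mem_erase hi), sub_self, comp_zero]
          · exact hcS j' hj'S

end Shifts

end PdObject

namespace PdTwist

open CategoricalEntropy

variable {𝒯 : Type*} [Category 𝒯] [Preadditive 𝒯] [HasZeroObject 𝒯] [HasShift 𝒯 ℤ]
  [∀ n : ℤ, (shiftFunctor 𝒯 n).Additive] [Pretriangulated 𝒯] [HasFiniteBiproducts 𝒯]
  [CategoryTheory.Linear ℂ 𝒯] {d : ℕ} (tw : PdTwist 𝒯 d)

theorem exists_iso_H (F : 𝒯) : ∃ (k : ℕ) (ns : Fin k → ℤ),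
    Nonempty (tw.H F ≅ ⨁ fun i => tw.E⟦ns i⟧) ∧
      ∀ n, (∃ i, ns i = n) ↔ homDim ℂ tw.E (-n) F ≠ 0 := by
  obtain ⟨k, ns, e, hns⟩ := tw.H_iso F
  refine ⟨k, ns, e, fun n => ?_⟩
  rw [homDim, ← hns, neg_neg, Finset.card_ne_zero, Finset.filter_nonempty_iff]
  simp only [Finset.mem_univ, true_and]

theorem exists_iso_H_homSeries (F : 𝒯) : ∃ (k : ℕ) (ns : Fin k → ℤ),
    Nonempty (tw.H F ≅ ⨁ fun i => tw.E⟦ns i⟧) ∧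
      ∀ t : ℝ, homSeries ℂ tw.E t F = ENNReal.ofReal (∑ i, Real.exp (ns i * t)) := by
  obtain ⟨k, ns, e, hns⟩ := tw.H_iso F
  exact ⟨k, ns, e, homSeries_eq_ofReal_sum ℂ hns⟩

theorem homSeries_ne_top (t : ℝ) (F : 𝒯) : homSeries ℂ tw.E t F ≠ ⊤ := by
  obtain ⟨k, ns, -, hF⟩ := tw.exists_iso_H_homSeries F
  exact hF t ▸ ENNReal.ofReal_ne_top

theorem exists_homSeries_zero_eq_natCast (F : 𝒯) : ∃ k : ℕ, homSeries ℂ tw.E 0 F = k := by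
  obtain ⟨k, ns, -, hF⟩ := tw.exists_iso_H_homSeries F
  exact ⟨k, by simp [hF]⟩

variable {G : 𝒯}

theorem exists_attachCostLE_shift_H (hG : IsSplitGenerator 𝒯 G) (t : ℝ) (k : ℕ) :
    ∃ c : ℝ, 0 ≤ c ∧ ∀ F, homSeries ℂ tw.E 0 F = k → ∀ m : ℤ,
      AttachCostLE G t ((tw.H F)⟦m⟧)
        (c * (Real.exp (m * t) * (homSeries ℂ tw.E t F).toReal)) := by
  obtain ⟨s, hs, hE⟩ := AttachCostLE.exists_forall_shift hG tw.E t
  refine ⟨2 ^ k * s, by positivity, fun F hF m => ?_⟩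
  obtain ⟨k', ns, ⟨e⟩, hF'⟩ := tw.exists_iso_H_homSeries F
  obtain rfl : k' = k := by simpa [hF'] using hF
  obtain ⟨e'⟩ := nonempty_shift_iso_biproduct e m
  have hsum := AttachCostLE.biproduct (fun i => by positivity) fun i => hE (ns i + m)
  refine (hsum.of_retract (.ofIso e')).mono (le_of_eq ?_)
  rw [hF', ENNReal.toReal_ofReal (Finset.sum_nonneg fun i _ => (Real.exp_pos _).le)]
  simp only [Int.cast_add, add_mul, Real.exp_add, Finset.mul_sum]
  exact Finset.sum_congr rfl fun i _ => by ring

theorem exists_costLE_functor_obj (hG : IsSplitGenerator 𝒯 G) (t : ℝ) (k : ℕ) :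
    ∃ c : ℝ, 0 ≤ c ∧ ∀ F, homSeries ℂ tw.E 0 F = k → ∀ r, CostLE G t F r →
      CostLE G t (tw.P.functor.obj F) (r + c * (homSeries ℂ tw.E t F).toReal) := by
  obtain ⟨c, hc, hH⟩ := tw.exists_attachCostLE_shift_H hG t k
  refine ⟨2 * (c * Real.exp t + c), by positivity, fun F hF r hr => ?_⟩
  have hH₁ := hH F hF 1
  have e₃ : (((tw.H F)⟦(-2 : ℤ)⟧)⟦(1 : ℤ)⟧)⟦(1 : ℤ)⟧ ≅ (tw.H F)⟦(0 : ℤ)⟧ :=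
    (shiftFunctor 𝒯 1).mapIso ((shiftFunctorAdd' 𝒯 (-2) 1 (-1) rfl).symm.app (tw.H F)) ≪≫
      (shiftFunctorAdd' 𝒯 (-1) 1 0 rfl).symm.app (tw.H F)
  have hH₃ := (hH F hF 0).of_retract (.ofIso e₃)
  have hT := AttachCostLE.of_distTriang
    (Triangle.shift_distinguished _ (rot_of_distTriang _ (tw.innerTri F)) 1) hH₁ hH₃
  have hP := hT _ _ _ (rot_of_distTriang _ (tw.outerTri F)) hr
  refine hP.mono (le_of_eq ?_)
  simp only [Int.cast_one, Int.cast_zero, one_mul, zero_mul, Real.exp_zero]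
  ring

variable [∀ X Y : 𝒯, FiniteDimensional ℂ (X ⟶ Y)]

theorem homDim_functor_obj_le (F : 𝒯) (n : ℤ) : homDim ℂ tw.E n (tw.P.functor.obj F) ≤
    homDim ℂ tw.E n F + homDim ℂ tw.E (n + 1) (tw.H F) + homDim ℂ tw.E n (tw.H F) := by
  have hP : homDim ℂ tw.E n (tw.P.functor.obj F) ≤
      homDim ℂ tw.E n F + homDim ℂ tw.E n ((tw.T F)⟦(1 : ℤ)⟧) :=
    homDim_obj₂_le ℂ (rot_of_distTriang _ (tw.outerTri F)) tw.E n
  have hT : homDim ℂ tw.E (n + 1) (tw.T F) ≤ homDim ℂ tw.E (n + 1) (tw.H F) +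
      homDim ℂ tw.E (n + 1) (((tw.H F)⟦(-2 : ℤ)⟧)⟦(1 : ℤ)⟧) :=
    homDim_obj₂_le ℂ (rot_of_distTriang _ (tw.innerTri F)) tw.E (n + 1)
  rw [homDim_shift_target, homDim_shift_target, show (-2 : ℤ) + (1 + (n + 1)) = n by ring] at hT
  rw [homDim_shift_target, add_comm 1 n] at hP
  omega

theorem homDim_H_le (F : 𝒯) (n : ℤ) : homDim ℂ tw.E n (tw.H F) ≤
    homDim ℂ tw.E n (tw.P.functor.obj F) + homDim ℂ tw.E (n + 1) F +
      homDim ℂ tw.E (n + 2) (tw.H F) := by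
  have hT : homDim ℂ tw.E n ((tw.T F)⟦(1 : ℤ)⟧) ≤
      homDim ℂ tw.E n (tw.P.functor.obj F) + homDim ℂ tw.E n (F⟦(1 : ℤ)⟧) :=
    homDim_obj₂_le ℂ (rot_of_distTriang _ (rot_of_distTriang _ (tw.outerTri F))) tw.E n
  have hH : homDim ℂ tw.E (n + 1) (((tw.H F)⟦(-2 : ℤ)⟧)⟦(1 : ℤ)⟧) ≤
      homDim ℂ tw.E (n + 1) (tw.T F) + homDim ℂ tw.E (n + 1) ((tw.H F)⟦(1 : ℤ)⟧) :=
    homDim_obj₂_le ℂ (rot_of_distTriang _ (rot_of_distTriang _ (tw.innerTri F))) tw.E (n + 1)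
  rw [homDim_shift_target, homDim_shift_target, homDim_shift_target,
    show (-2 : ℤ) + (1 + (n + 1)) = n by ring, show 1 + (n + 1) = n + 2 by ring] at hH
  rw [homDim_shift_target, homDim_shift_target, add_comm 1 n] at hT
  omega

theorem homDim_H_self_ne_zero_iff {n : ℤ} :
    homDim ℂ tw.E n (tw.H tw.E) ≠ 0 ↔ ∃ k : ℕ, k ≤ 2 * d ∧ n = 2 * k := by
  obtain ⟨m, ns, ⟨e⟩, hns⟩ := tw.exists_iso_H tw.E
  rw [homDim_congr ℂ (Iso.refl _) e, homDim_biproduct, ne_eq, Finset.sum_eq_zero_iff]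
  simp only [homDim_shift_target, Finset.mem_univ, true_imp_iff, not_forall, ← ne_eq,
    PdObject.homDim_self_ne_zero_iff]
  constructor
  · rintro ⟨i, k, hk, hik⟩
    obtain ⟨j, hj, hij⟩ := tw.homDim_self_ne_zero_iff.1 ((hns (ns i)).1 ⟨i, rfl⟩)
    exact ⟨j + k, by omega, by push_cast; omega⟩
  · rintro ⟨k, hk, rfl⟩
    obtain ⟨i, hi⟩ := (hns (-(2 * (k / 2 : ℕ)))).2 <|
      tw.homDim_self_ne_zero_iff.2 ⟨k / 2, by omega, by ring⟩
    exact ⟨i, k - k / 2, by omega, by omega⟩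

theorem homDim_functor_obj_self_eq_zero {n : ℤ} (hn : 4 * d < n) :
    homDim ℂ tw.E n (tw.P.functor.obj tw.E) = 0 := by
  have hE : homDim ℂ tw.E n tw.E = 0 := tw.homDim_self_eq_zero (by omega)
  have hH (m : ℤ) (hm : 4 * d < m) : homDim ℂ tw.E m (tw.H tw.E) = 0 :=
    not_not.1 (mt tw.homDim_H_self_ne_zero_iff.1 (by omega))
  have := tw.homDim_functor_obj_le tw.E n
  have := hH n hn
  have := hH (n + 1) (by omega)
  omega

theorem homDim_functor_obj_self_ne_zero :
    homDim ℂ tw.E (4 * d) (tw.P.functor.obj tw.E) ≠ 0 := by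
  have hE : homDim ℂ tw.E (4 * d + 1) tw.E = 0 := tw.homDim_self_eq_zero (by omega)
  have hH : homDim ℂ tw.E (4 * d + 2) (tw.H tw.E) = 0 :=
    not_not.1 (mt tw.homDim_H_self_ne_zero_iff.1 (by omega))
  have hH' : homDim ℂ tw.E (4 * d) (tw.H tw.E) ≠ 0 :=
    tw.homDim_H_self_ne_zero_iff.2 ⟨2 * d, le_rfl, by push_cast; ring⟩
  have := tw.homDim_H_le tw.E (4 * d)
  omega

theorem homDim_functor_obj_source (n : ℤ) (F : 𝒯) :
    homDim ℂ (tw.P.functor.obj tw.E) n (tw.P.functor.obj F) = homDim ℂ tw.E n F := by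
  have := tw.commShift
  have := Functor.additive_of_preserves_binary_products tw.P.functor
  exact homDim_map ℂ tw.isBrick tw.P.functor n F

section SelfDecomposition

variable {k : ℕ} {ns : Fin k → ℤ}

theorem ι_comp_ev_ne_zero (e : tw.H tw.E ≅ ⨁ fun i => tw.E⟦ns i⟧) (hns : ∀ i, ns i ≤ 0)
    {i₀ : Fin k} (hi₀ : ns i₀ = 0) :
    biproduct.ι _ i₀ ≫ e.inv ≫ tw.ι tw.E ≫ tw.ev tw.E ≠ 0 := by
  let X := tw.P.functor.obj tw.E
  obtain ⟨ξ, hξ⟩ : ∃ ξ : tw.E⟦ns i₀⟧ ⟶ X⟦4 * (d : ℤ)⟧, ξ ≠ 0 := by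
    by_contra! h
    refine tw.homDim_functor_obj_self_ne_zero ?_
    rw [← sub_zero (4 * (d : ℤ)), ← hi₀, ← homDim_shift_source ℂ tw.isBrick]
    exact (homDim_eq_zero_iff ℂ).2 h
  obtain ⟨e'⟩ := nonempty_shift_iso_biproduct e (-2)
  obtain ⟨ζ, hζ⟩ : ∃ ζ : tw.T tw.E ⟶ X⟦4 * (d : ℤ)⟧, e.hom ≫ biproduct.π _ i₀ ≫ ξ = tw.ι tw.E ≫ ζ :=
    Triangle.yoneda_exact₂ _ (tw.innerTri tw.E) _
      (show tw.θ tw.E ≫ e.hom ≫ biproduct.π _ i₀ ≫ ξ = 0 by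
        rw [← cancel_epi e'.inv, comp_zero]
        refine biproduct.hom_ext' _ _ fun i => ?_
        rw [comp_zero]
        refine (homDim_eq_zero_iff ℂ).1 ?_ _
        rw [homDim_shift_source ℂ tw.isBrick]
        exact tw.homDim_functor_obj_self_eq_zero (by linarith [hns i]))
  obtain ⟨ξ', hξ'⟩ : ∃ ξ' : tw.E ⟶ X⟦4 * (d : ℤ)⟧, tw.ev tw.E ≫ ξ' = ζ :=
    exists_comp_eq_of_mor₃_comp_eq_zero (tw.outerTri tw.E) ζ <|
      (homDim_eq_zero_iff ℂ).1 (by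
        rw [homDim_shift_target, tw.homDim_functor_obj_source]
        exact tw.homDim_self_eq_zero (by omega)) _
  intro h
  refine hξ ?_
  calc ξ = biproduct.ι _ i₀ ≫ e.inv ≫ e.hom ≫ biproduct.π _ i₀ ≫ ξ := by simp
    _ = (biproduct.ι _ i₀ ≫ e.inv ≫ tw.ι tw.E ≫ tw.ev tw.E) ≫ ξ' := by
      simp only [hζ, ← hξ', Category.assoc]
    _ = 0 := by rw [h, zero_comp]

theorem isIso_ι_comp_ev (e : tw.H tw.E ≅ ⨁ fun i => tw.E⟦ns i⟧) (hns : ∀ i, ns i ≤ 0)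
    {i₀ : Fin k} (hi₀ : ns i₀ = 0) :
    IsIso (biproduct.ι _ i₀ ≫ e.inv ≫ tw.ι tw.E ≫ tw.ev tw.E) := by
  have e₀ : tw.E⟦ns i₀⟧ ≅ tw.E := (shiftFunctorZero' 𝒯 (ns i₀) hi₀).app tw.E
  exact (tw.isBrick.of_iso e₀.symm).isIso_of_ne_zero e₀ (tw.ι_comp_ev_ne_zero e hns hi₀)

/-- `θ` maps `k` shifts of `E` to `k` shifts of `E`, but its component along the degree-zero
summand is determined by the others because `ι ≫ ev` is invertible there. -/
theorem exists_retract_comp_θ_eq_zero (e : tw.H tw.E ≅ ⨁ fun i => tw.E⟦ns i⟧) (hns : ∀ i, ns i ≤ 0)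
    {i₀ : Fin k} (hi₀ : ns i₀ = 0) :
    ∃ (i : Fin k) (r : Retract (tw.E⟦ns i + -2⟧) ((tw.H tw.E)⟦(-2 : ℤ)⟧)),
      r.i ≫ tw.θ tw.E = 0 := by
  classical
  obtain ⟨e'⟩ := nonempty_shift_iso_biproduct e (-2)
  obtain ⟨i, -, c, hci, hc⟩ := tw.exists_syzygy (fun i => ns i + -2) ns Finset.univ
    (Finset.univ.erase i₀) (Finset.card_erase_lt_of_mem (Finset.mem_univ i₀))
    fun i j => biproduct.ι (fun i => tw.E⟦ns i + -2⟧) i ≫ e'.inv ≫ tw.θ tw.E ≫ e.hom ≫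
      biproduct.π _ j
  let r : Retract (tw.E⟦ns i + -2⟧) ((tw.H tw.E)⟦(-2 : ℤ)⟧) :=
    ⟨biproduct.lift c ≫ e'.inv, e'.hom ≫ biproduct.π _ i, by simp [hci]⟩
  have hr (j : Fin k) (hj : j ≠ i₀) : r.i ≫ tw.θ tw.E ≫ e.hom ≫ biproduct.π _ j = 0 := by
    simpa [r, biproduct.lift_eq, Preadditive.sum_comp] using
      hc j (Finset.mem_erase.2 ⟨hj, Finset.mem_univ j⟩)
  let i₀H : tw.E⟦ns i₀⟧ ⟶ tw.H tw.E := biproduct.ι (fun i => tw.E⟦ns i⟧) i₀ ≫ e.inv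
  have hθ : r.i ≫ tw.θ tw.E = (r.i ≫ tw.θ tw.E ≫ e.hom ≫ biproduct.π _ i₀) ≫ i₀H := by
    rw [← cancel_mono e.hom]
    refine biproduct.hom_ext _ _ fun j => ?_
    obtain rfl | hj := eq_or_ne j i₀
    · simp [i₀H]
    · simp [i₀H, biproduct.ι_π_ne _ hj.symm, hr j hj]
  have hr₀ : r.i ≫ tw.θ tw.E ≫ e.hom ≫ biproduct.π _ i₀ = 0 := by
    have : IsIso (i₀H ≫ tw.ι tw.E ≫ tw.ev tw.E) := by
      simpa only [i₀H, Category.assoc] using tw.isIso_ι_comp_ev e hns hi₀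
    have hθι : tw.θ tw.E ≫ tw.ι tw.E = 0 := comp_distTriang_mor_zero₁₂ _ (tw.innerTri tw.E)
    rw [← cancel_mono (i₀H ≫ tw.ι tw.E ≫ tw.ev tw.E), zero_comp, ← Category.assoc, ← hθ,
      Category.assoc, reassoc_of% hθι, zero_comp, comp_zero]
  exact ⟨i, r, by rw [hθ, hr₀, zero_comp]⟩

end SelfDecomposition

theorem exists_shift_iso_functor_obj_self :
    ∃ v : ℤ, Nonempty (tw.E⟦v⟧ ≅ tw.P.functor.obj tw.E) := by
  obtain ⟨k, ns, ⟨e⟩, hns⟩ := tw.exists_iso_H tw.E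
  have hns' (i : Fin k) : ∃ j : ℕ, ns i = -(2 * j) := by
    obtain ⟨j, -, hj⟩ := tw.homDim_self_ne_zero_iff.1 ((hns (ns i)).1 ⟨i, rfl⟩)
    exact ⟨j, by omega⟩
  obtain ⟨i₀, hi₀⟩ := (hns 0).2 (tw.homDim_self_ne_zero_iff.2 ⟨0, by simp⟩)
  obtain ⟨i, r, hr⟩ := tw.exists_retract_comp_θ_eq_zero e
    (fun i => by obtain ⟨j, hj⟩ := hns' i; omega) hi₀
  obtain ⟨rT⟩ := nonempty_retract_cone (tw.innerTri tw.E) r hr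
  have hL : IsBrick (tw.E⟦ns i + -2⟧) := tw.isBrick.map (shiftFunctor 𝒯 _)
  have hdeg : homDim ℂ ((tw.E⟦ns i + -2⟧)⟦(1 : ℤ)⟧) 0 tw.E = 0 := by
    obtain ⟨j, hj⟩ := hns' i
    rw [homDim_shift_source ℂ hL, homDim_shift_source ℂ tw.isBrick]
    exact tw.homDim_self_eq_zero (by omega)
  have : Subsingleton ((tw.E⟦ns i + -2⟧)⟦(1 : ℤ)⟧ ⟶ tw.E) := by
    rwa [← Module.finrank_zero_iff (R := ℂ), ← homDim_zero]
  obtain ⟨rP⟩ := nonempty_retract_cone (tw.outerTri tw.E) rT (Subsingleton.elim _ _)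
  have hP : IsBrick (tw.P.functor.obj tw.E) := tw.isBrick.map tw.P.functor
  obtain ⟨φ⟩ := hP.nonempty_iso_of_retract rP
    ((hL.map (shiftFunctor 𝒯 1)).map (shiftFunctor 𝒯 1)).id_ne_zero
  exact ⟨_, ⟨(shiftFunctorAdd' 𝒯 (ns i + -2 + 1) 1 _ rfl).app tw.E ≪≫
    (shiftFunctor 𝒯 1).mapIso ((shiftFunctorAdd' 𝒯 (ns i + -2) 1 _ rfl).app tw.E) ≪≫ φ⟩⟩

theorem nonempty_functor_obj_self_iso : Nonempty (tw.P.functor.obj tw.E ≅ tw.E⟦-(2 * d : ℤ)⟧) := by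
  obtain ⟨v, ⟨φ⟩⟩ := tw.exists_shift_iso_functor_obj_self
  have hX (n : ℤ) : homDim ℂ tw.E n (tw.P.functor.obj tw.E) = homDim ℂ tw.E (v + n) tw.E := by
    rw [← homDim_congr ℂ (Iso.refl tw.E) φ, homDim_shift_target]
  obtain ⟨k, hk, hkv⟩ := tw.homDim_self_ne_zero_iff.1 (hX _ ▸ tw.homDim_functor_obj_self_ne_zero)
  have hkd : ¬ k < d := fun hlt => tw.homDim_self_ne_zero_iff.2
    ⟨k + 1, hlt, (by push_cast; omega : v + (4 * d + 2) = 2 * (k + 1 : ℕ))⟩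
    ((hX _).symm.trans (tw.homDim_functor_obj_self_eq_zero (by omega)))
  obtain rfl : v = -(2 * d : ℤ) := by omega
  exact ⟨φ.symm⟩

theorem homDim_functor_obj (n : ℤ) (F : 𝒯) :
    homDim ℂ tw.E n (tw.P.functor.obj F) = homDim ℂ tw.E (n - 2 * d) F := by
  obtain ⟨φ⟩ := tw.nonempty_functor_obj_self_iso
  rw [← tw.homDim_functor_obj_source (n - 2 * d), homDim_congr ℂ φ (Iso.refl _),
    homDim_shift_source ℂ tw.isBrick, sub_neg_eq_add, sub_add_cancel]

theorem homSeries_functor_obj (t : ℝ) (F : 𝒯) : homSeries ℂ tw.E t (tw.P.functor.obj F) =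
    ENNReal.ofReal (Real.exp (-2 * d * t)) * homSeries ℂ tw.E t F := by
  rw [homSeries_of_homDim_eq_sub ℂ fun n => tw.homDim_functor_obj n F]
  push_cast
  ring_nf

theorem homSeries_iterate (t : ℝ) (G : 𝒯) (n : ℕ) :
    homSeries ℂ tw.E t (tw.P.functor.obj^[n] G) =
      ENNReal.ofReal (Real.exp (-2 * d * t) ^ n) * homSeries ℂ tw.E t G := by
  induction n with
  | zero => simp
  | succ n ih =>
    rw [Function.iterate_succ_apply', homSeries_functor_obj, ih, pow_succ', ← mul_assoc,
      ENNReal.ofReal_mul (Real.exp_pos _).le]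

theorem exists_costLE_iterate (hG : IsSplitGenerator 𝒯 G) {t : ℝ} (ht : t ≤ 0) :
    ∃ c : ℝ, 0 ≤ c ∧ ∀ n : ℕ,
      CostLE G t (tw.P.functor.obj^[n] G) ((1 + n * c) * Real.exp (-2 * d * t) ^ n) := by
  obtain ⟨k, hk⟩ := tw.exists_homSeries_zero_eq_natCast G
  obtain ⟨c, hc, hP⟩ := tw.exists_costLE_functor_obj hG t k
  have hq : 1 ≤ Real.exp (-2 * d * t) :=
    Real.one_le_exp (mul_nonneg_of_nonpos_of_nonpos (by simp) ht)
  set q := Real.exp (-2 * d * t) with hqdef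
  set w := (homSeries ℂ tw.E t G).toReal with hw
  refine ⟨c * w, by positivity, fun n => ?_⟩
  induction n with
  | zero => simpa using CostLE.self
  | succ n ih =>
    have hstep := hP _ (by rw [homSeries_iterate, hk]; simp) _ ih
    rw [homSeries_iterate, ← hqdef, ENNReal.toReal_mul, ENNReal.toReal_ofReal (by positivity),
      ← hw] at hstep
    rw [Function.iterate_succ_apply']
    refine hstep.mono ?_
    calc (1 + n * (c * w)) * q ^ n + c * (q ^ n * w)
        = (1 + (n + 1 : ℕ) * (c * w)) * q ^ n := by push_cast; ring
      _ ≤ (1 + (n + 1 : ℕ) * (c * w)) * q ^ (n + 1) := by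
        gcongr
        exact n.le_succ

theorem pow_le_complexity_iterate (hG : IsSplitGenerator 𝒯 G) {t : ℝ} (n : ℕ)
    (hn : (complexitySet 𝒯 G (tw.P.functor.obj^[n] G) t).Nonempty) :
    Real.exp (-2 * d * t) ^ n ≤ complexity 𝒯 G (tw.P.functor.obj^[n] G) t := by
  refine le_csInf hn fun r hr => ?_
  have hle := homSeries_le_of_mem_complexitySet ℂ hr tw.E
  rwa [homSeries_iterate, ENNReal.mul_le_mul_iff_left (homSeries_ne_zero ℂ hG tw.nonzero t)
    (tw.homSeries_ne_top t G), ENNReal.ofReal_le_ofReal_iff (nonneg_of_mem_complexitySet hr)]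
    at hle

end PdTwist

/-- Fan. Let `X` be a smooth projective variety of dimension `2d` over `ℂ`
and `ℰ ∈ D^b(X)` a `ℙ^d`-object with `ℙ^d`-twist `P_ℰ`. For every `t ≤ 0`, the categorical
entropy satisfies `h_t(P_ℰ) = -2dt`, i.e. `(1/n) log δ_t(G, P_ℰ^n G) → -2dt` for a split
generator `G`. -/
theorem entropy_PdTwist_nonpos (d : ℕ) (tw : PdTwist C d)
    (hgen : ∃ G : C, IsSplitGenerator C G) (t : ℝ) (ht : t ≤ 0) :
    ∀ G : C, IsSplitGenerator C G →
      Tendsto (fun n : ℕ =>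
          Real.log (complexity C G ((fun X => tw.P.functor.obj X)^[n] G) t) / n)
        atTop (nhds (-2 * (d : ℝ) * t)) := by
  intro G hG
  obtain ⟨c, hc, hcost⟩ := tw.exists_costLE_iterate hG ht
  have hlower (n : ℕ) : Real.exp (-2 * d * t) ^ n ≤ complexity C G (tw.P.functor.obj^[n] G) t := by
    obtain ⟨r, hr, -⟩ := (hcost n).exists_mem_complexitySet
    exact tw.pow_le_complexity_iterate hG n ⟨r, hr⟩
  have hlim := CategoricalEntropy.tendsto_log_div_of_pow_le_of_le (Real.exp_pos _) hc hlower
    fun n => (hcost n).complexity_le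
  rwa [Real.log_exp] at hlim
end

section
/- Let X be a smooth projective variety of dimension 2d over ℂ and let ℰ ∈ D^b(X) be a ℙ^d-object with associated ℙ^d-twist P_ℰ. Then h_0(P_ℰ) = 0 = log ρ((P_ℰ)_{H^*}), where (P_ℰ)_{H^*} is the induced Fourier–Mukai type action on H^*(X; ℂ) and ρ denotes its spectral radius; i.e., the Kikuta–Takahashi Gromov–Yomdin type conjecture holds for ℙ^d-twists. -/
open CategoryTheory CategoryTheory.Limits CategoryTheory.Pretriangulated Filter

universe v u

variable (C : Type u) [Category.{v} C] [Preadditive C] [HasZeroObject C]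
  [HasShift C ℤ] [∀ n : ℤ, (shiftFunctor C n).Additive] [Pretriangulated C]
  [HasFiniteBiproducts C] [CategoryTheory.Linear ℂ C]
  [∀ X Y : C, Module.Finite ℂ (X ⟶ Y)]

/-!
Complexity at `t = 0` counts cones. Counted this way, `P` applied to an object `F` costs at most a
constant times `dim Hom^*(E, F)` cones in addition to those of `F`, since `P F` is an extension
of `F` by shifts of copies of `Hom^*(E, F) ⊗ E`. It remains to bound `dim Hom^*(E, Pⁿ G)`
independently of `n`. The object `P E` is built from shifts of `E`, and it is again a brick without
negative self-extensions; comparing its highest and its lowest shift of `E` shows that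
`P E ≅ E⟦a⟧` for some `a`. As `P` is an equivalence, `dim Hom^*(E, P F) = dim Hom^*(E, F)`. Hence
`1 ≤ δ₀(G, Pⁿ G) ≤ A + B n`, and the entropy vanishes.
-/

section Towers

variable {D : Type*} [Category* D] [Preadditive D] [HasZeroObject D] [HasShift D ℤ]
  [∀ n : ℤ, (shiftFunctor D n).Additive] [Pretriangulated D]

theorem nonempty_retract_obj₂ {T T' : Triangle D} (hT : T ∈ distTriang D)
    (hT' : T' ∈ distTriang D) (r₁ : Retract T.obj₁ T'.obj₁) (r₃ : Retract T.obj₃ T'.obj₃)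
    (hi : T.mor₃ ≫ r₁.i⟦(1 : ℤ)⟧' = r₃.i ≫ T'.mor₃)
    (hr : T'.mor₃ ≫ r₁.r⟦(1 : ℤ)⟧' = r₃.r ≫ T.mor₃) :
    Nonempty (Retract T.obj₂ T'.obj₂) := by
  obtain ⟨i, hi₁, hi₂⟩ := complete_distinguished_triangle_morphism₂ _ _ hT hT' _ _ hi
  obtain ⟨r, hr₁, hr₂⟩ := complete_distinguished_triangle_morphism₂ _ _ hT' hT _ _ hr
  let φ : T ⟶ T :=
    { hom₁ := 𝟙 _
      hom₂ := i ≫ r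
      hom₃ := 𝟙 _
      comm₁ := by rw [reassoc_of% hi₁, hr₁, r₁.retract_assoc, Category.id_comp]
      comm₂ := by rw [Category.assoc, ← hr₂, ← reassoc_of% hi₂, r₃.retract] }
  have : IsIso (i ≫ r) := isIso₂_of_isIso₁₃ φ hT hT (inferInstanceAs (IsIso (𝟙 _)))
    (inferInstanceAs (IsIso (𝟙 _)))
  exact ⟨⟨i, r ≫ inv (i ≫ r), by rw [← Category.assoc, IsIso.hom_inv_id]⟩⟩

theorem nonempty_retract_obj₁_biprod {T : Triangle D} (hT : T ∈ distTriang D) {W : D}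
    (ψ : T.obj₁ ⟶ W) (χ : W ⟶ T.obj₁) (h : (ψ ≫ χ) ≫ T.mor₁ = T.mor₁) :
    Nonempty (Retract T.obj₁ (W ⊞ T.obj₃⟦(-1 : ℤ)⟧)) := by
  let δ : T.obj₃⟦(-1 : ℤ)⟧ ⟶ T.obj₁ := T.invRotate.mor₁
  obtain ⟨s, hs⟩ : ∃ s : T.obj₁ ⟶ T.obj₃⟦(-1 : ℤ)⟧, 𝟙 T.obj₁ - ψ ≫ χ = s ≫ δ :=
    Triangle.coyoneda_exact₂ _ (inv_rot_of_distTriang _ hT) _ <| by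
      change (𝟙 T.obj₁ - ψ ≫ χ) ≫ T.mor₁ = 0
      rw [Preadditive.sub_comp, h, Category.id_comp, sub_self]
  exact ⟨⟨biprod.lift ψ s, biprod.desc χ δ, by rw [biprod.lift_desc, ← hs, add_sub_cancel]⟩⟩

/-- A substitute for the octahedral axiom, which is not available for a pretriangulated
category: along `Z' ⟶ Z ⟶ G`, the pullback `Y'` of the extension `X ⟶ Y ⟶ Z` and the fibre
`Y''` of `Y ⟶ G` are isomorphic only after composition with `Y'' ⟶ Y`. -/
theorem exists_comp_comp_eq_of_distTriang {X Y Z Z' G Y' Y'' : D}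
    {f : X ⟶ Y} {g : Y ⟶ Z} {h : Z ⟶ X⟦(1 : ℤ)⟧} (hT : Triangle.mk f g h ∈ distTriang D)
    {a : Z' ⟶ Z} {b : Z ⟶ G} {c : G ⟶ Z'⟦(1 : ℤ)⟧} (hS : Triangle.mk a b c ∈ distTriang D)
    {f' : X ⟶ Y'} {g' : Y' ⟶ Z'} (hT' : Triangle.mk f' g' (a ≫ h) ∈ distTriang D)
    {i : Y'' ⟶ Y} {w : G ⟶ Y''⟦(1 : ℤ)⟧} (hT'' : Triangle.mk i (g ≫ b) w ∈ distTriang D) :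
    ∃ (ψ : Y'' ⟶ Y') (χ : Y' ⟶ Y''), (ψ ≫ χ) ≫ i = i := by
  have hab : a ≫ b = 0 := comp_distTriang_mor_zero₁₂ _ hS
  have hgh : g ≫ h = 0 := comp_distTriang_mor_zero₂₃ _ hT
  have higb : i ≫ g ≫ b = 0 := comp_distTriang_mor_zero₁₂ _ hT''
  have hX : (a ≫ h) ≫ (𝟙 X)⟦(1 : ℤ)⟧' = a ≫ h := by
    rw [CategoryTheory.Functor.map_id, Category.comp_id]
  obtain ⟨j, hfj, hjg⟩ : ∃ j : Y' ⟶ Y, f' ≫ j = 𝟙 X ≫ f ∧ g' ≫ a = j ≫ g :=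
    complete_distinguished_triangle_morphism₂ _ _ hT' hT (𝟙 X) a hX
  obtain ⟨χ, rfl⟩ : ∃ χ : Y' ⟶ Y'', j = χ ≫ i :=
    Triangle.coyoneda_exact₂ _ hT'' j
      (by change j ≫ g ≫ b = 0; rw [← reassoc_of% hjg, hab, comp_zero])
  obtain ⟨φ, hφ⟩ : ∃ φ : Y'' ⟶ Z', i ≫ g = φ ≫ a :=
    Triangle.coyoneda_exact₂ _ hS (i ≫ g) ((Category.assoc _ _ _).trans higb)
  obtain ⟨ψ, rfl⟩ : ∃ ψ : Y'' ⟶ Y', φ = ψ ≫ g' :=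
    Triangle.coyoneda_exact₃ _ hT' φ
      (by change φ ≫ a ≫ h = 0; rw [← reassoc_of% hφ, hgh, comp_zero])
  obtain ⟨t, ht⟩ : ∃ t : Y'' ⟶ X, i - ψ ≫ χ ≫ i = t ≫ f :=
    Triangle.coyoneda_exact₂ _ hT (i - ψ ≫ χ ≫ i) (by
      change (i - ψ ≫ χ ≫ i) ≫ g = 0
      rw [Preadditive.sub_comp, hφ, Category.assoc ψ (χ ≫ i), ← hjg, Category.assoc, sub_self])
  refine ⟨ψ + t ≫ f', χ, ?_⟩
  rw [Category.id_comp] at hfj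
  rw [Preadditive.add_comp, Preadditive.add_comp, Category.assoc, Category.assoc, Category.assoc,
    hfj, ← ht, add_sub_cancel]

/-- `BuiltInSteps E k X`: the object `X` is obtained from zero objects by `k` extensions by
shifts of `E`. Retracts are allowed at every stage rather than only at the end, and no weight is
recorded: at `t = 0` every step of a tower has weight `1`. -/
inductive BuiltInSteps (E : D) : ℕ → D → Prop
  | zero {Z : D} (hZ : IsZero Z) : BuiltInSteps E 0 Z
  | step {k : ℕ} (T : Triangle D) (hT : T ∈ distTriang D) {n : ℤ} (e : T.obj₃ ≅ E⟦n⟧)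
      (h : BuiltInSteps E k T.obj₁) : BuiltInSteps E (k + 1) T.obj₂
  | retract {k : ℕ} {X Y : D} (r : Retract X Y) (h : BuiltInSteps E k Y) : BuiltInSteps E k X

namespace BuiltInSteps

variable {E F G X Y Z : D} {k l : ℕ}

theorem of_iso (h : BuiltInSteps E k X) (e : X ≅ Y) : BuiltInSteps E k Y :=
  h.retract (.ofIso e.symm)

theorem biprod_shift (h : BuiltInSteps E k X) (n : ℤ) : BuiltInSteps E (k + 1) (X ⊞ E⟦n⟧) :=
  h.step _ (binaryBiproductTriangle_distinguished X (E⟦n⟧)) (Iso.refl _)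

theorem mono (h : BuiltInSteps E k X) (hkl : k ≤ l) : BuiltInSteps E l X := by
  induction l, hkl using Nat.le_induction with
  | base => exact h
  | succ l _ ih => exact (ih.biprod_shift 0).retract ⟨biprod.inl, biprod.fst, biprod.inl_fst⟩

variable (E) in
theorem shift_self (n : ℤ) : BuiltInSteps E 1 (E⟦n⟧) :=
  ((zero (isZero_zero D)).biprod_shift n).retract ⟨biprod.inr, biprod.snd, biprod.inr_snd⟩

variable (E) in
theorem self : BuiltInSteps E 1 E :=
  (shift_self E 0).of_iso ((shiftFunctorZero D ℤ).app E)

theorem shift (h : BuiltInSteps E k X) (m : ℤ) : BuiltInSteps E k (X⟦m⟧) := by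
  induction h with
  | zero hZ => exact zero (Functor.map_isZero _ hZ)
  | step T hT e _ ih =>
    exact ih.step _ (T.shift_distinguished hT m)
      ((shiftFunctor D m).mapIso e ≪≫ ((shiftFunctorAdd D _ m).app E).symm)
  | retract r _ ih => exact ih.retract (r.map (shiftFunctor D m))

/-- The factor `2` is the price of not having the octahedral axiom. -/
theorem of_distTriang {f : X ⟶ Y} {g : Y ⟶ Z} {h : Z ⟶ X⟦(1 : ℤ)⟧}
    (hT : Triangle.mk f g h ∈ distTriang D) (hX : BuiltInSteps E k X)
    (hZ : BuiltInSteps E l Z) : BuiltInSteps E (k + 2 * l) Y := by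
  induction hZ generalizing Y with
  | zero hZ =>
    have : IsIso f := Triangle.isZero₃_iff_isIso₁ _ hT |>.mp hZ
    exact hX.of_iso (asIso f)
  | step S hS e _ ih =>
    obtain ⟨Y', f', g', hT'⟩ := distinguished_cocone_triangle₂ (S.mor₁ ≫ h)
    obtain ⟨Y'', i, w, hT''⟩ := distinguished_cocone_triangle₁ (g ≫ S.mor₂)
    obtain ⟨ψ, χ, hi⟩ := exists_comp_comp_eq_of_distTriang hT hS hT' hT''
    obtain ⟨r⟩ := nonempty_retract_obj₁_biprod hT'' ψ χ hi
    have hY'' : BuiltInSteps E _ Y'' := ((ih hT').biprod_shift _).retract <|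
      r.trans (.ofIso (biprod.mapIso (Iso.refl Y')
        ((shiftFunctor D (-1 : ℤ)).mapIso e ≪≫ ((shiftFunctorAdd D _ (-1 : ℤ)).app E).symm)))
    exact hY''.step _ hT'' e
  | retract r _ ih =>
    obtain ⟨Y', f', g', hT'⟩ := distinguished_cocone_triangle₂ (r.r ≫ h)
    have hi : h ≫ (𝟙 X)⟦(1 : ℤ)⟧' = r.i ≫ r.r ≫ h := by simp
    have hr : (r.r ≫ h) ≫ (𝟙 X)⟦(1 : ℤ)⟧' = r.r ≫ h := by simp
    obtain ⟨s⟩ := nonempty_retract_obj₂ hT hT' (.refl X) r hi hr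
    exact (ih hT').retract s

theorem trans (hE : BuiltInSteps G k E) (hF : BuiltInSteps E l F) :
    BuiltInSteps G (2 * k * l) F := by
  induction hF with
  | zero hZ => exact zero hZ
  | step T hT e _ ih => exact (of_distTriang hT ih ((hE.shift _).of_iso e.symm)).mono (by lia)
  | retract r _ ih => exact ih.retract r

theorem biproduct (ns : Fin k → ℤ) : BuiltInSteps E k (⨁ fun i => E⟦ns i⟧) := by
  induction k with
  | zero => exact zero ((IsZero.iff_id_eq_zero _).mpr (biproduct.hom_ext _ _ (Fin.elim0 ·)))
  | succ k ih =>
    refine ((ih fun i => ns i.castSucc).biprod_shift (ns (Fin.last k))).retract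
      ⟨biprod.lift (biproduct.lift fun i : Fin k => biproduct.π _ i.castSucc)
          (biproduct.π _ (Fin.last k)),
        biprod.desc (biproduct.desc fun i : Fin k => biproduct.ι (fun j => E⟦ns j⟧) i.castSucc)
          (biproduct.ι (fun j => E⟦ns j⟧) (Fin.last k)), ?_⟩
    rw [biprod.lift_desc, biproduct.lift_desc, ← biproduct.total, Fin.sum_univ_castSucc]

theorem isZero (h : BuiltInSteps E 0 X) : IsZero X := by
  generalize hk : 0 = k at h
  induction h with
  | zero hZ => exact hZ
  | step => lia
  | retract r _ ih => exact (ih hk).of_mono r.i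

theorem isZero_of_isZero (hE : IsZero E) (h : BuiltInSteps E k X) : IsZero X := by
  induction h with
  | zero hZ => exact hZ
  | step T hT e _ ih =>
    exact T.isZero₂_of_isZero₁₃ hT ih ((Functor.map_isZero _ hE).of_iso e)
  | retract r _ ih => exact ih.of_mono r.i

end BuiltInSteps

theorem BuildVal.exists_builtInSteps {E B : D} {r : ℝ} (h : BuildVal D E 0 B r) :
    ∃ k : ℕ, r = k ∧ BuiltInSteps E k B := by
  induction h with
  | zero Z hZ => exact ⟨0, Nat.cast_zero.symm, .zero hZ⟩
  | step A B n r f g h hT _ ih =>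
    obtain ⟨k, rfl, hA⟩ := ih
    exact ⟨k + 1, by simp, hA.step _ hT (Iso.refl _)⟩

theorem BuiltInSteps.exists_retract_buildVal {E F : D} {k : ℕ} (h : BuiltInSteps E k F) :
    ∃ B : D, BuildVal D E 0 B k ∧ Nonempty (Retract F B) := by
  induction h with
  | zero hZ => exact ⟨_, by simpa using BuildVal.zero (E := E) (t := 0) _ hZ, ⟨.refl _⟩⟩
  | @step k T hT n e _ ih =>
    obtain ⟨B, hB, ⟨s⟩⟩ := ih
    obtain ⟨Y, f, g, hY⟩ := distinguished_cocone_triangle₂ (e.inv ≫ T.mor₃ ≫ s.i⟦(1 : ℤ)⟧')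
    have hi : T.mor₃ ≫ s.i⟦(1 : ℤ)⟧' = e.hom ≫ e.inv ≫ T.mor₃ ≫ s.i⟦(1 : ℤ)⟧' := by simp
    have hr : (e.inv ≫ T.mor₃ ≫ s.i⟦(1 : ℤ)⟧') ≫ s.r⟦(1 : ℤ)⟧' = e.inv ≫ T.mor₃ := by
      simp [← Functor.map_comp]
    obtain ⟨r⟩ := nonempty_retract_obj₂ hT hY s ⟨e.hom, e.inv, e.hom_inv_id⟩ hi hr
    exact ⟨Y, by simpa using BuildVal.step _ _ _ _ _ _ _ hY hB, ⟨r⟩⟩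
  | retract r _ ih =>
    obtain ⟨B, hB, ⟨s⟩⟩ := ih
    exact ⟨B, hB, ⟨r.trans s⟩⟩

theorem exists_iso_biprod_of_retract {X Y : D} (r : Retract X Y) :
    ∃ X' : D, Nonempty (Y ≅ X ⊞ X') := by
  obtain ⟨X', g, w, hT⟩ := distinguished_cocone_triangle r.i
  have hw : w = 0 := Triangle.mor₃_eq_zero_of_mono₁ _ hT (inferInstanceAs (Mono r.i))
  obtain ⟨e, -⟩ := exists_iso_binaryBiproduct_of_distTriang _ hT hw
  exact ⟨X', ⟨e⟩⟩

theorem mem_complexitySet_zero_iff {E F : D} {r : ℝ} :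
    r ∈ complexitySet D E F 0 ↔ ∃ k : ℕ, r = k ∧ BuiltInSteps E k F := by
  constructor
  · rintro ⟨B, F', hB, ⟨e⟩⟩
    obtain ⟨k, hk, h⟩ := hB.exists_builtInSteps
    exact ⟨k, hk, (h.of_iso e).retract ⟨biprod.inl, biprod.fst, biprod.inl_fst⟩⟩
  · rintro ⟨k, rfl, h⟩
    obtain ⟨B, hB, ⟨r⟩⟩ := h.exists_retract_buildVal
    obtain ⟨F', e⟩ := exists_iso_biprod_of_retract r
    exact ⟨B, F', hB, e⟩

theorem inSplitClosure_iff {E F : D} : InSplitClosure D E F ↔ ∃ k : ℕ, BuiltInSteps E k F := by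
  simp [InSplitClosure, Set.Nonempty, mem_complexitySet_zero_iff]

theorem BuiltInSteps.complexity_le {E F : D} {k : ℕ} (h : BuiltInSteps E k F) :
    complexity D E F 0 ≤ k := by
  refine csInf_le ⟨0, ?_⟩ (mem_complexitySet_zero_iff.mpr ⟨k, rfl, h⟩)
  rintro r hr
  obtain ⟨l, rfl, -⟩ := mem_complexitySet_zero_iff.mp hr
  exact l.cast_nonneg

theorem one_le_complexity {E F : D} (hF : ¬ IsZero F) (h : InSplitClosure D E F) :
    1 ≤ complexity D E F 0 := by
  refine le_csInf h fun r hr => ?_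
  obtain ⟨k, rfl, hk⟩ := mem_complexitySet_zero_iff.mp hr
  have hk₀ : k ≠ 0 := by rintro rfl; exact hF hk.isZero
  exact_mod_cast Nat.one_le_iff_ne_zero.mpr hk₀

theorem IsSplitGenerator.not_isZero {G F : D} (hG : IsSplitGenerator D G) (hF : ¬ IsZero F) :
    ¬ IsZero G := fun hG₀ =>
  let ⟨_, h⟩ := inSplitClosure_iff.mp (hG F)
  hF (h.isZero_of_isZero hG₀)

end Towers

section Bricks

variable {D : Type*} [Category* D]

/-- A brick: a nonzero object all of whose nonzero endomorphisms are invertible. -/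
structure IsBrick [HasZeroMorphisms D] (X : D) : Prop where
  not_isZero : ¬ IsZero X
  isIso_of_ne_zero : ∀ f : X ⟶ X, f ≠ 0 → IsIso f

namespace IsBrick

variable [HasZeroMorphisms D] {X Y : D}

theorem map {D' : Type*} [Category* D'] [HasZeroMorphisms D'] (hX : IsBrick X) (F : D ⥤ D')
    [F.Full] [F.Faithful] [F.PreservesZeroMorphisms] : IsBrick (F.obj X) where
  not_isZero h := hX.not_isZero (h.of_full_of_faithful_of_isZero F X)
  isIso_of_ne_zero f hf := by
    obtain ⟨f, rfl⟩ := F.map_surjective f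
    have := hX.isIso_of_ne_zero f (by rintro rfl; exact hf (F.map_zero X X))
    infer_instance

theorem isIso_of_iso (hX : IsBrick X) (e : X ≅ Y) {f : X ⟶ Y} (hf : f ≠ 0) : IsIso f := by
  have : IsIso (f ≫ e.inv) := hX.isIso_of_ne_zero _ fun h => hf (by
    rw [← cancel_mono e.inv, h, zero_comp])
  exact IsIso.of_isIso_comp_right f e.inv

theorem isIso_of_comp_ne_zero (hX : IsBrick X) (hY : IsBrick Y) {f : X ⟶ Y} {g : Y ⟶ X}
    (h : f ≫ g ≠ 0) : IsIso f := by
  have hfg : IsIso (f ≫ g) := hX.isIso_of_ne_zero _ h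
  have hgf : IsIso (g ≫ f) := hY.isIso_of_ne_zero _ fun h' => h (by
    rw [← cancel_mono (f ≫ g), Category.assoc, reassoc_of% h']; simp)
  have : IsSplitMono f := ⟨⟨⟨g ≫ inv (f ≫ g), by rw [← Category.assoc, IsIso.hom_inv_id]⟩⟩⟩
  have : Epi f := epi_of_epi g f
  exact isIso_of_epi_of_isSplitMono f

end IsBrick

end Bricks

section Shift

variable {D : Type*} [Category* D] [Preadditive D] [HasShift D ℤ]

theorem hom_eq_zero_of_shift [∀ n : ℤ, (shiftFunctor D n).Additive] {X Y X' Y' : D} (k : ℤ)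
    (eX : X' ≅ X⟦k⟧) (eY : Y' ≅ Y⟦k⟧) (h : ∀ f : X ⟶ Y, f = 0) (f : X' ⟶ Y') : f = 0 := by
  obtain ⟨g, hg⟩ := (shiftFunctor D k).map_surjective (eX.inv ≫ f ≫ eY.hom)
  rw [← cancel_mono eY.hom, ← cancel_epi eX.inv, ← hg, h g, Functor.map_zero, zero_comp, comp_zero]

/-- The shifts `E⟦m⟧` with `m ∈ S`. Their right and left orthogonals are the objects which
have no nonzero morphism from, respectively to, any of these shifts. -/
def shiftsIn (E : D) (S : Set ℤ) : ObjectProperty D :=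
  .ofObj fun m : S => E⟦(m : ℤ)⟧

variable {E M : D} {S S' : Set ℤ}

theorem rightOrthogonal_shiftsIn_iff :
    (shiftsIn E S).rightOrthogonal M ↔ ∀ m ∈ S, ∀ f : E⟦m⟧ ⟶ M, f = 0 :=
  ⟨fun h m hm f => h f (ObjectProperty.ofObj_apply (fun m : S => E⟦(m : ℤ)⟧) ⟨m, hm⟩),
    by rintro h _ f ⟨m⟩; exact h m m.2 f⟩

theorem leftOrthogonal_shiftsIn_iff :
    (shiftsIn E S).leftOrthogonal M ↔ ∀ m ∈ S, ∀ f : M ⟶ E⟦m⟧, f = 0 :=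
  ⟨fun h m hm f => h f (ObjectProperty.ofObj_apply (fun m : S => E⟦(m : ℤ)⟧) ⟨m, hm⟩),
    by rintro h _ f ⟨m⟩; exact h m m.2 f⟩

theorem rightOrthogonal_shiftsIn_anti (h : S ⊆ S') :
    (shiftsIn E S').rightOrthogonal ≤ (shiftsIn E S).rightOrthogonal := fun _ hM =>
  rightOrthogonal_shiftsIn_iff.mpr fun m hm => rightOrthogonal_shiftsIn_iff.mp hM m (h hm)

theorem leftOrthogonal_shiftsIn_anti (h : S ⊆ S') :
    (shiftsIn E S').leftOrthogonal ≤ (shiftsIn E S).leftOrthogonal := fun _ hM =>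
  leftOrthogonal_shiftsIn_iff.mpr fun m hm => leftOrthogonal_shiftsIn_iff.mp hM m (h hm)

/-- A brick `E` with `Hom(E, E⟦n⟧) = 0` for `n < 0` and for `n = 1`. -/
structure IsRigidBrick (E : D) : Prop extends IsBrick E where
  hom_shift_eq_zero : ∀ n : ℤ, n < 0 ∨ n = 1 → ∀ f : E ⟶ E⟦n⟧, f = 0

theorem IsRigidBrick.hom_eq_zero [∀ n : ℤ, (shiftFunctor D n).Additive] (hE : IsRigidBrick E)
    {X Y : D} {m n : ℤ} (hmn : n < m ∨ n = m + 1) (eX : X ≅ E⟦m⟧) (eY : Y ≅ E⟦n⟧) (f : X ⟶ Y) :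
    f = 0 :=
  hom_eq_zero_of_shift m eX (eY ≪≫ (shiftFunctorAdd' D (n - m) m n (by ring)).app E)
    (hE.hom_shift_eq_zero (n - m) (by lia)) f

end Shift

section Orthogonals

instance isStableUnderRetracts_rightOrthogonal {D : Type*} [Category* D] [HasZeroMorphisms D]
    (P : ObjectProperty D) : P.rightOrthogonal.IsStableUnderRetracts where
  of_retract r hY _ f hX := by rw [← cancel_mono r.i, hY (f ≫ r.i) hX, zero_comp]

instance isStableUnderRetracts_leftOrthogonal {D : Type*} [Category* D] [HasZeroMorphisms D]
    (P : ObjectProperty D) : P.leftOrthogonal.IsStableUnderRetracts where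
  of_retract r hX _ f hY := by rw [← cancel_epi r.r, hX (r.r ≫ f) hY, comp_zero]

variable {D : Type*} [Category* D] [Preadditive D] [HasZeroObject D] [HasShift D ℤ]
  [∀ n : ℤ, (shiftFunctor D n).Additive] [Pretriangulated D] {E M : D} {l : ℕ}

theorem BuiltInSteps.exists_of_directed {ι : Type*} [Nonempty ι] {Q : ι → ObjectProperty D}
    [∀ i, (Q i).ContainsZero] [∀ i, (Q i).IsTriangulatedClosed₂]
    [∀ i, (Q i).IsStableUnderRetracts] (hQ : Directed (· ≤ ·) Q)
    (hE : ∀ n : ℤ, ∃ i, Q i (E⟦n⟧)) (h : BuiltInSteps E l M) : ∃ i, Q i M := by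
  induction h with
  | zero hZ =>
    obtain ⟨i⟩ := ‹Nonempty ι›
    obtain ⟨Z, hZ', hQZ⟩ := (Q i).exists_prop_of_containsZero
    exact ⟨i, (Q i).prop_of_retract (.ofIso (hZ.iso hZ')) hQZ⟩
  | step T hT e _ ih =>
    obtain ⟨i, hi⟩ := ih
    obtain ⟨j, hj⟩ := hE _
    obtain ⟨s, his, hjs⟩ := hQ i j
    exact ⟨s, (Q s).ext_of_isTriangulatedClosed₂ T hT (his _ hi)
      ((Q s).prop_of_retract (.ofIso e) (hjs _ hj))⟩
  | retract r _ ih =>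
    obtain ⟨i, hi⟩ := ih
    exact ⟨i, (Q i).prop_of_retract r hi⟩

theorem BuiltInSteps.exists_leftOrthogonal_rightOrthogonal (h : BuiltInSteps E l M) :
    ∃ K : ℤ, (shiftsIn E (Set.Ioi K)).rightOrthogonal.leftOrthogonal M := by
  refine h.exists_of_directed (Antitone.directed_le fun K K' hK X hX L f hL => hX f ?_)
    fun n => ⟨n - 1, fun L f hL => rightOrthogonal_shiftsIn_iff.mp hL n (by simp) f⟩
  exact rightOrthogonal_shiftsIn_anti (Set.Ioi_subset_Ioi hK) _ hL

theorem BuiltInSteps.exists_rightOrthogonal (h : BuiltInSteps E l M) (hE : IsRigidBrick E) :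
    ∃ B : ℤ, (shiftsIn E (Set.Ioi B)).rightOrthogonal M :=
  h.exists_of_directed
    (Monotone.directed_le fun _ _ hB => rightOrthogonal_shiftsIn_anti (Set.Ioi_subset_Ioi hB))
    fun n => ⟨n, rightOrthogonal_shiftsIn_iff.mpr fun _ hm =>
      hE.hom_eq_zero (.inl hm) (Iso.refl _) (Iso.refl _)⟩

theorem BuiltInSteps.exists_leftOrthogonal (h : BuiltInSteps E l M) (hE : IsRigidBrick E) :
    ∃ A : ℤ, (shiftsIn E (Set.Iio A)).leftOrthogonal M :=
  h.exists_of_directed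
    (Antitone.directed_le fun _ _ hA => leftOrthogonal_shiftsIn_anti (Set.Iio_subset_Iio hA))
    fun n => ⟨n, leftOrthogonal_shiftsIn_iff.mpr fun _ hm =>
      hE.hom_eq_zero (.inl hm) (Iso.refl _) (Iso.refl _)⟩

end Orthogonals

section Rigidity

variable {D : Type*} [Category* D] [Preadditive D] [HasZeroObject D] [HasShift D ℤ]
  [∀ n : ℤ, (shiftFunctor D n).Additive] [Pretriangulated D]

namespace IsRigidBrick

variable {E L M M' N : D} {b : ℤ} {g : E⟦b⟧ ⟶ M} {u : M ⟶ M'} {w : M' ⟶ (E⟦b⟧)⟦(1 : ℤ)⟧}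

theorem rightOrthogonal_cone (hE : IsRigidBrick E) (hT : Triangle.mk g u w ∈ distTriang D)
    (hg : g ≠ 0) (hM : (shiftsIn E (Set.Ioi b)).rightOrthogonal M) :
    (shiftsIn E (Set.Ioi b)).rightOrthogonal M' := by
  rw [rightOrthogonal_shiftsIn_iff] at hM ⊢
  intro m (hm : b < m) x
  have hwg : w ≫ g⟦(1 : ℤ)⟧' = 0 := comp_distTriang_mor_zero₃₁ _ hT
  have hxw : x ≫ w = 0 := by
    obtain hm | rfl : b + 1 < m ∨ m = b + 1 := by lia
    · exact hE.hom_eq_zero (.inl hm) (Iso.refl _) ((shiftFunctorAdd D b 1).app E).symm _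
    · by_contra hne
      have : IsIso (x ≫ w) := (hE.toIsBrick.map (shiftFunctor D (b + 1))).isIso_of_iso
        ((shiftFunctorAdd D b 1).app E) hne
      have hg₁ : g⟦(1 : ℤ)⟧' = 0 := by
        rw [← cancel_epi (x ≫ w), Category.assoc, hwg, comp_zero, comp_zero]
      exact hg ((Functor.map_eq_zero_iff _).mp hg₁)
  obtain ⟨y, rfl⟩ : ∃ y : E⟦m⟧ ⟶ M, x = y ≫ u := Triangle.coyoneda_exact₃ _ hT x hxw
  rw [hM m hm y, zero_comp]

theorem leftOrthogonal_cone (hE : IsRigidBrick E) {a : ℤ} {f : M ⟶ E⟦a⟧} {w : E⟦a⟧ ⟶ N}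
    {v : N ⟶ M⟦(1 : ℤ)⟧} (hT : Triangle.mk f w v ∈ distTriang D) (hf : f ≠ 0)
    (hM : (shiftsIn E (Set.Iio a)).leftOrthogonal M) :
    (shiftsIn E (Set.Iic a)).leftOrthogonal N := by
  rw [leftOrthogonal_shiftsIn_iff] at hM ⊢
  intro i (hi : i ≤ a) x
  have hfw : f ≫ w = 0 := comp_distTriang_mor_zero₁₂ _ hT
  have hwx : w ≫ x = 0 := by
    obtain hi | rfl := hi.lt_or_eq
    · exact hE.hom_eq_zero (.inl hi) (Iso.refl _) (Iso.refl _) _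
    · by_contra hne
      have : IsIso (w ≫ x) :=
        (hE.toIsBrick.map (shiftFunctor D i)).isIso_of_ne_zero (w ≫ x) hne
      exact hf (by rw [← cancel_mono (w ≫ x), reassoc_of% hfw, zero_comp, zero_comp])
  obtain ⟨y, rfl⟩ : ∃ y : M⟦(1 : ℤ)⟧ ⟶ E⟦i⟧, x = v ≫ y := Triangle.yoneda_exact₃ _ hT x hwx
  rw [hom_eq_zero_of_shift 1 (Iso.refl _) ((shiftFunctorAdd' D (i - 1) 1 i (by ring)).app E)
    (hM (i - 1) (by simp only [Set.mem_Iio]; lia)) y, comp_zero]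

theorem exists_top (hE : IsRigidBrick E) {l : ℕ} (h : BuiltInSteps E l M) (hM : ¬ IsZero M) :
    ∃ β : ℤ, (∃ g : E⟦β⟧ ⟶ M, g ≠ 0) ∧ (shiftsIn E (Set.Ioi β)).rightOrthogonal M := by
  obtain ⟨K, hK⟩ := h.exists_leftOrthogonal_rightOrthogonal
  obtain ⟨B, hB⟩ := h.exists_rightOrthogonal hE
  obtain ⟨β, hβ, hβ'⟩ := Int.exists_greatest_of_bdd (P := fun m => ∃ g : E⟦m⟧ ⟶ M, g ≠ 0)
    ⟨B, fun m ⟨g, hg⟩ => not_lt.mp fun hm => hg (rightOrthogonal_shiftsIn_iff.mp hB m hm g)⟩ <| by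
      by_contra! h₀
      exact hM ((IsZero.iff_id_eq_zero M).mpr
        (hK (𝟙 M) (rightOrthogonal_shiftsIn_iff.mpr fun m _ => h₀ m)))
  refine ⟨β, hβ, rightOrthogonal_shiftsIn_iff.mpr fun m hm g => ?_⟩
  by_contra hg
  exact hm.not_ge (hβ' m ⟨g, hg⟩)

variable (k : Type*) [Field k] [Linear k D] [∀ X Y : D, Module.Finite k (X ⟶ Y)]

theorem finrank_hom_cone_lt (hE : IsRigidBrick E) (hT : Triangle.mk g u w ∈ distTriang D)
    (hg : g ≠ 0) : Module.finrank k (E⟦b⟧ ⟶ M') < Module.finrank k (E⟦b⟧ ⟶ M) := by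
  let φ : (E⟦b⟧ ⟶ M) →ₗ[k] (E⟦b⟧ ⟶ M') := Linear.rightComp k (E⟦b⟧) u
  have hφ : Function.Surjective φ := fun x => by
    have hxw : x ≫ w = 0 :=
      hE.hom_eq_zero (.inr rfl) (Iso.refl _) ((shiftFunctorAdd D b 1).app E).symm _
    obtain ⟨y, rfl⟩ : ∃ y : E⟦b⟧ ⟶ M, x = y ≫ u := Triangle.coyoneda_exact₃ _ hT x hxw
    exact ⟨y, rfl⟩
  have hker : 0 < Module.finrank k (LinearMap.ker φ) := by
    have hgφ : φ g = 0 := comp_distTriang_mor_zero₁₂ _ hT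
    exact Module.finrank_pos_iff_exists_ne_zero.mpr ⟨⟨g, hgφ⟩, by simpa [Subtype.ext_iff] using hg⟩
  have := φ.finrank_range_add_finrank_ker
  rw [LinearMap.range_eq_top.mpr hφ, finrank_top] at this
  lia

include k

theorem exists_hom_rightOrthogonal_Ici (hE : IsRigidBrick E)
    (hM : (shiftsIn E (Set.Ioi b)).rightOrthogonal M) :
    ∃ (M' : D) (u : M ⟶ M'), (shiftsIn E (Set.Ici b)).rightOrthogonal M' ∧
      ∀ N, (shiftsIn E {b}).leftOrthogonal N → ∀ x : N ⟶ M, x ≫ u = 0 → x = 0 := by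
  induction hr : Module.finrank k (E⟦b⟧ ⟶ M) using Nat.strong_induction_on generalizing M with
  | _ r ih =>
    by_cases h : ∀ g : E⟦b⟧ ⟶ M, g = 0
    · refine ⟨M, 𝟙 M, rightOrthogonal_shiftsIn_iff.mpr fun m hm => ?_, fun N _ x hx => ?_⟩
      · obtain rfl | hm : b = m ∨ b < m := hm.eq_or_lt
        exacts [h, rightOrthogonal_shiftsIn_iff.mp hM m hm]
      · rwa [Category.comp_id] at hx
    · push Not at h
      obtain ⟨g, hg⟩ := h
      obtain ⟨M', u, w, hT⟩ := distinguished_cocone_triangle g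
      obtain ⟨M'', u', hM'', hu'⟩ := ih _ (hr ▸ hE.finrank_hom_cone_lt k hT hg)
        (hE.rightOrthogonal_cone hT hg hM) rfl
      refine ⟨M'', u ≫ u', hM'', fun N hN x hx => ?_⟩
      obtain ⟨y, rfl⟩ : ∃ y : N ⟶ E⟦b⟧, x = y ≫ g :=
        Triangle.coyoneda_exact₂ _ hT x (hu' N hN _ ((Category.assoc _ _ _).trans hx))
      rw [leftOrthogonal_shiftsIn_iff.mp hN b rfl y, zero_comp]

theorem exists_hom_rightOrthogonal_Ioi (hE : IsRigidBrick E)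
    (hM : (shiftsIn E (Set.Ioi b)).rightOrthogonal M) (j : ℕ) :
    ∃ (M' : D) (u : M ⟶ M'), (shiftsIn E (Set.Ioi (b - j))).rightOrthogonal M' ∧
      ∀ N, (shiftsIn E (Set.Iic b)).leftOrthogonal N → ∀ x : N ⟶ M, x ≫ u = 0 → x = 0 := by
  induction j with
  | zero =>
    exact ⟨M, 𝟙 M, by simpa using hM, fun N _ x hx => by rwa [Category.comp_id] at hx⟩
  | succ j ih =>
    obtain ⟨M', u, hM', hu⟩ := ih
    obtain ⟨M'', u', hM'', hu'⟩ := hE.exists_hom_rightOrthogonal_Ici k hM'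
    refine ⟨M'', u ≫ u', rightOrthogonal_shiftsIn_anti ?_ _ hM'', fun N hN x hx => hu N hN x ?_⟩
    · intro m hm
      simp only [Set.mem_Ioi, Set.mem_Ici] at hm ⊢
      lia
    · refine hu' N (leftOrthogonal_shiftsIn_anti ?_ _ hN) _ ((Category.assoc _ _ _).trans hx)
      simp

/-- Since `L` only involves finitely many shifts of `E`, a truncation of `L` far enough below `b`
is zero, while no nonzero morphism from `N` to `L` dies in it. -/
theorem hom_eq_zero_of_orthogonal (hE : IsRigidBrick E) {l : ℕ} (hL : BuiltInSteps E l L)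
    (hL' : (shiftsIn E (Set.Ioi b)).rightOrthogonal L)
    (hN : (shiftsIn E (Set.Iic b)).leftOrthogonal N) (x : N ⟶ L) : x = 0 := by
  obtain ⟨K, hK⟩ := hL.exists_leftOrthogonal_rightOrthogonal
  obtain ⟨L', u, hL', hu⟩ := hE.exists_hom_rightOrthogonal_Ioi k hL' (b - K).toNat
  have hu₀ : u = 0 :=
    hK u (rightOrthogonal_shiftsIn_anti (Set.Ioi_subset_Ioi (by lia)) _ hL')
  exact hu N hN x (by rw [hu₀, comp_zero])

theorem exists_bottom (hE : IsRigidBrick E) {l : ℕ} (h : BuiltInSteps E l M) (hM : ¬ IsZero M) :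
    ∃ α : ℤ, (∃ f : M ⟶ E⟦α⟧, f ≠ 0) ∧ (shiftsIn E (Set.Iio α)).leftOrthogonal M := by
  obtain ⟨A, hA⟩ := h.exists_leftOrthogonal hE
  obtain ⟨α, hα, hα'⟩ := Int.exists_least_of_bdd (P := fun m => ∃ f : M ⟶ E⟦m⟧, f ≠ 0)
    ⟨A, fun m ⟨f, hf⟩ => not_lt.mp fun hm => hf (leftOrthogonal_shiftsIn_iff.mp hA m hm f)⟩ <| by
      by_contra! h₀
      obtain ⟨β, -, hβ⟩ := hE.exists_top h hM
      exact hM ((IsZero.iff_id_eq_zero M).mpr (hE.hom_eq_zero_of_orthogonal k h hβ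
        (leftOrthogonal_shiftsIn_iff.mpr fun m _ => h₀ m) (𝟙 M)))
  refine ⟨α, hα, leftOrthogonal_shiftsIn_iff.mpr fun m hm f => ?_⟩
  by_contra hf
  exact hm.not_ge (hα' m ⟨f, hf⟩)

theorem comp_ne_zero (hE : IsRigidBrick E) {a : ℤ} {f : M ⟶ E⟦a⟧} (hf : f ≠ 0)
    (hM : (shiftsIn E (Set.Iio a)).leftOrthogonal M) {l : ℕ} (hL : BuiltInSteps E l L)
    (hL' : (shiftsIn E (Set.Ioi a)).rightOrthogonal L) {g : E⟦a⟧ ⟶ L} (hg : g ≠ 0) :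
    f ≫ g ≠ 0 := fun h => by
  obtain ⟨N, w, v, hT⟩ := distinguished_cocone_triangle f
  obtain ⟨y, rfl⟩ : ∃ y : N ⟶ L, g = w ≫ y := Triangle.yoneda_exact₂ _ hT g h
  rw [hE.hom_eq_zero_of_orthogonal k hL hL' (hE.leftOrthogonal_cone hT hf hM) y] at hg
  exact hg comp_zero

/-- The composite of a nonzero map from `M` to its lowest shift `E⟦α⟧` and a nonzero map from
its highest shift `E⟦β⟧` to `M` is a nonzero map `M ⟶ M⟦α - β⟧`, so that `α = β`. -/
theorem exists_iso_shift (hE : IsRigidBrick E) {l : ℕ} (h : BuiltInSteps E l M) (hM : IsBrick M)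
    (hneg : ∀ m < (0 : ℤ), ∀ f : M ⟶ M⟦m⟧, f = 0) : ∃ a : ℤ, Nonempty (E⟦a⟧ ≅ M) := by
  obtain ⟨β, ⟨g, hg⟩, hβ⟩ := hE.exists_top h hM.not_isZero
  obtain ⟨α, ⟨f, hf⟩, hα⟩ := hE.exists_bottom k h hM.not_isZero
  have hαβ : α ≤ β := by
    by_contra! hlt
    exact hM.not_isZero ((IsZero.iff_id_eq_zero M).mpr (hE.hom_eq_zero_of_orthogonal k h hβ
      (leftOrthogonal_shiftsIn_anti (Set.Iic_subset_Iio.mpr hlt) _ hα) (𝟙 M)))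
  obtain hlt | rfl := hαβ.lt_or_eq
  · let e := (shiftFunctorAdd' D β (α - β) α (by ring)).app E
    have hβ' : (shiftsIn E (Set.Ioi α)).rightOrthogonal (M⟦α - β⟧) :=
      rightOrthogonal_shiftsIn_iff.mpr fun m (hm : α < m) => hom_eq_zero_of_shift (α - β)
        ((shiftFunctorAdd' D (m - (α - β)) (α - β) m (by ring)).app E) (Iso.refl _)
        (rightOrthogonal_shiftsIn_iff.mp hβ _ (by simp only [Set.mem_Ioi]; lia))
    have hg' : e.hom ≫ g⟦α - β⟧' ≠ 0 := fun h₀ => hg <| by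
      rwa [Preadditive.IsIso.comp_left_eq_zero, Functor.map_eq_zero_iff] at h₀
    exact absurd (hneg _ (sub_neg.mpr hlt) _)
      (hE.comp_ne_zero k hf hα (h.shift (α - β)) hβ' hg')
  · have : IsIso f := hM.isIso_of_comp_ne_zero (hE.toIsBrick.map (shiftFunctor D α))
      (hE.comp_ne_zero k hf hα h hβ hg)
    exact ⟨α, ⟨(asIso f).symm⟩⟩

end IsRigidBrick

end Rigidity

section Linear

variable {k : Type*} [Field k] {D : Type*} [Category* D] [Preadditive D] [Linear k D]

theorem exists_smul_id_eq {X : D} (hX : Module.finrank k (X ⟶ X) = 1) (f : X ⟶ X) :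
    ∃ c : k, c • 𝟙 X = f := by
  refine (finrank_eq_one_iff_of_nonzero' (𝟙 X) fun h => ?_).mp hX f
  have : Subsingleton (X ⟶ X) := ⟨((IsZero.iff_id_eq_zero X).mpr h).eq_of_src⟩
  simp [Module.finrank_zero_of_subsingleton] at hX

theorem isBrick_of_finrank_end_eq_one {X : D} (hX : Module.finrank k (X ⟶ X) = 1) :
    IsBrick X where
  not_isZero h := by
    have : Subsingleton (X ⟶ X) := ⟨h.eq_of_src⟩
    simp [Module.finrank_zero_of_subsingleton] at hX
  isIso_of_ne_zero f hf := by
    obtain ⟨c, rfl⟩ := exists_smul_id_eq hX f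
    have hc : c ≠ 0 := by rintro rfl; exact hf (zero_smul k _)
    exact ⟨c⁻¹ • 𝟙 X, by simp [smul_smul, hc], by simp [smul_smul, hc]⟩

/-- The functor `Q` need not be linear: on `Hom(X, Y)` it is semilinear with respect to a map
`k → k` induced by its action on `End X`. -/
theorem finrank_hom_le_of_full {D' : Type*} [Category* D'] [Preadditive D'] [Linear k D']
    (Q : D ⥤ D') [Q.Full] [Q.Additive] {X Y : D} [Module.Finite k (X ⟶ Y)]
    (hX : Module.finrank k (Q.obj X ⟶ Q.obj X) = 1) :
    Module.finrank k (Q.obj X ⟶ Q.obj Y) ≤ Module.finrank k (X ⟶ Y) := by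
  let b := Module.finBasis k (X ⟶ Y)
  have hQ_smul (c : k) (f : X ⟶ Y) : ∃ c' : k, c' • Q.map f = Q.map (c • f) := by
    obtain ⟨c', hc'⟩ := exists_smul_id_eq hX (Q.map (c • 𝟙 X))
    refine ⟨c', ?_⟩
    calc c' • Q.map f = (c' • 𝟙 (Q.obj X)) ≫ Q.map f := by rw [Linear.smul_comp, Category.id_comp]
      _ = Q.map (c • f) := by rw [hc', ← Q.map_comp, Linear.smul_comp, Category.id_comp]
  have hspan : Submodule.span k (Set.range fun i => Q.map (b i)) = ⊤ := by
    refine eq_top_iff.mpr fun w _ => ?_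
    obtain ⟨v, rfl⟩ := Q.map_surjective w
    rw [← b.sum_repr v, Q.map_sum]
    refine Submodule.sum_mem _ fun i _ => ?_
    obtain ⟨c, hc⟩ := hQ_smul (b.repr v i) (b i)
    exact hc ▸ Submodule.smul_mem _ _ (Submodule.subset_span ⟨i, rfl⟩)
  have hcard := finrank_range_le_card (R := k) fun i => Q.map (b i)
  rwa [Set.finrank, hspan, finrank_top, Fintype.card_fin] at hcard

/-- The total dimension `∑ₙ dim Hom(E, F⟦n⟧)` of `Hom^*(E, F)`. It has the junk value `0` if
infinitely many of the spaces `Hom(E, F⟦n⟧)` have nonzero (finite) dimension. -/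
noncomputable def totalHomDim (k : Type*) [Field k] [Linear k D] [HasShift D ℤ] (E F : D) : ℕ :=
  ∑ᶠ n : ℤ, Module.finrank k (E ⟶ F⟦n⟧)

end Linear

theorem finsum_card_fiber {ι α : Type*} [Fintype ι] [DecidableEq α] (f : ι → α) :
    ∑ᶠ a, (Finset.univ.filter fun i => f i = a).card = Fintype.card ι := by
  rw [finsum_eq_sum_of_support_subset (s := Finset.univ.image f), ← Finset.card_univ,
    Finset.card_eq_sum_card_image f]
  intro a ha
  obtain ⟨i, hi⟩ := Finset.card_ne_zero.mp ha
  simpa using ⟨i, (Finset.mem_filter.mp hi).2⟩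

namespace PdObject

variable {D : Type*} [Category* D] [Preadditive D] [HasShift D ℤ] [Linear ℂ D] {d : ℕ}
  (o : PdObject D d)

theorem finrank_end : Module.finrank ℂ (o.E ⟶ o.E) = 1 := by
  rw [← o.hom_rank_one 0 d.zero_le]
  let e := (shiftFunctorZero' D (2 * ((0 : ℕ) : ℤ)) (by simp)).app o.E
  exact (Linear.homCongr ℂ (Iso.refl o.E) e).finrank_eq.symm

theorem isRigidBrick : IsRigidBrick o.E where
  toIsBrick := isBrick_of_finrank_end_eq_one o.finrank_end
  hom_shift_eq_zero n hn := o.hom_rank_zero n (by rintro ⟨k, -, rfl⟩; lia)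

end PdObject

namespace PdTwist

variable {D : Type*} [Category* D] [Preadditive D] [HasZeroObject D] [HasShift D ℤ]
  [∀ n : ℤ, (shiftFunctor D n).Additive] [Pretriangulated D] [HasFiniteBiproducts D]
  [Linear ℂ D] {d : ℕ} (tw : PdTwist D d)

instance additive_P : tw.P.functor.Additive :=
  Functor.additive_of_preserves_binary_products _

theorem finite_support_finrank_hom (F : D) :
    (Function.support fun n : ℤ => Module.finrank ℂ (tw.E ⟶ F⟦n⟧)).Finite := by
  obtain ⟨k, ns, -, hns⟩ := tw.H_iso F
  refine (Set.finite_range fun i => -ns i).subset fun n hn => ?_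
  rw [Function.mem_support, ← hns n, Finset.card_ne_zero] at hn
  obtain ⟨i, hi⟩ := hn
  exact ⟨i, neg_eq_iff_eq_neg.mpr (Finset.mem_filter.mp hi).2⟩

theorem builtInSteps_H (F : D) : BuiltInSteps tw.E (totalHomDim ℂ tw.E F) (tw.H F) := by
  obtain ⟨k, ns, ⟨e⟩, hns⟩ := tw.H_iso F
  have hk : totalHomDim ℂ tw.E F = k := by
    simp only [totalHomDim, ← hns, ← neg_eq_iff_eq_neg]
    rw [finsum_card_fiber, Fintype.card_fin]
  rw [hk]
  exact (BuiltInSteps.biproduct ns).of_iso e.symm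

theorem builtInSteps_T (F : D) : BuiltInSteps tw.E (3 * totalHomDim ℂ tw.E F) (tw.T F) :=
  (BuiltInSteps.of_distTriang (rot_of_distTriang _ (tw.innerTri F)) (tw.builtInSteps_H F)
    (((tw.builtInSteps_H F).shift (-2)).shift 1)).mono (by lia)

theorem builtInSteps_P {G F : D} {x c : ℕ} (hE : BuiltInSteps G c tw.E)
    (hF : BuiltInSteps G x F) :
    BuiltInSteps G (x + 12 * c * totalHomDim ℂ tw.E F) (tw.P.functor.obj F) :=
  (BuiltInSteps.of_distTriang (rot_of_distTriang _ (tw.outerTri F)) hF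
    ((hE.trans (tw.builtInSteps_T F)).shift 1)).mono (by lia)

theorem isZero_of_isZero_iterate {G : D} {n : ℕ} (h : IsZero (tw.P.functor.obj^[n] G)) :
    IsZero G := by
  induction n with
  | zero => exact h
  | succ n ih =>
    rw [Function.iterate_succ_apply'] at h
    exact ih (h.of_full_of_faithful_of_isZero tw.P.functor _)

variable [∀ X Y : D, Module.Finite ℂ (X ⟶ Y)]

theorem exists_iso_shift : ∃ a : ℤ, Nonempty (tw.E⟦a⟧ ≅ tw.P.functor.obj tw.E) := by
  let := tw.commShift
  refine tw.isRigidBrick.exists_iso_shift ℂ (tw.builtInSteps_P (.self _) (.self _))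
    (tw.isRigidBrick.toIsBrick.map tw.P.functor) fun m hm f => ?_
  obtain ⟨g, hg⟩ := tw.P.functor.map_surjective (f ≫ (tw.P.functor.commShiftIso m).inv.app tw.E)
  rw [← cancel_mono ((tw.P.functor.commShiftIso m).inv.app tw.E), ← hg,
    tw.isRigidBrick.hom_shift_eq_zero m (.inl hm) g, Functor.map_zero, zero_comp]

theorem finrank_hom_P_le {a : ℤ} (e : tw.E⟦a⟧ ≅ tw.P.functor.obj tw.E) (F : D) (n : ℤ) :
    Module.finrank ℂ (tw.E ⟶ (tw.P.functor.obj F)⟦n⟧) ≤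
      Module.finrank ℂ (tw.E ⟶ F⟦n + a⟧) := by
  let := tw.commShift
  let Q : D ⥤ D := tw.P.functor ⋙ shiftFunctor D (-a)
  let eE : Q.obj tw.E ≅ tw.E :=
    (shiftFunctor D (-a)).mapIso e.symm ≪≫ (shiftFunctorCompIsoId D a (-a) (by simp)).app tw.E
  let eF : Q.obj (F⟦n + a⟧) ≅ (tw.P.functor.obj F)⟦n⟧ :=
    (shiftFunctor D (-a)).mapIso ((tw.P.functor.commShiftIso (n + a)).app F) ≪≫
      ((shiftFunctorAdd' D (n + a) (-a) n (by ring)).app (tw.P.functor.obj F)).symm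
  rw [← (Linear.homCongr ℂ eE eF).finrank_eq]
  exact finrank_hom_le_of_full Q ((Linear.homCongr ℂ eE eE).finrank_eq.trans tw.finrank_end)

theorem totalHomDim_P_le (F : D) :
    totalHomDim ℂ tw.E (tw.P.functor.obj F) ≤ totalHomDim ℂ tw.E F := by
  obtain ⟨a, ⟨e⟩⟩ := tw.exists_iso_shift
  calc totalHomDim ℂ tw.E (tw.P.functor.obj F)
      ≤ ∑ᶠ n : ℤ, Module.finrank ℂ (tw.E ⟶ F⟦n + a⟧) :=
        finsum_le_finsum' (tw.finite_support_finrank_hom _)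
          ((tw.finite_support_finrank_hom F).preimage (add_left_injective a).injOn)
          (tw.finrank_hom_P_le e F)
    _ = totalHomDim ℂ tw.E F :=
        finsum_comp_equiv (Equiv.addRight a) (f := fun n => Module.finrank ℂ (tw.E ⟶ F⟦n⟧))

theorem totalHomDim_iterate_le (G : D) (n : ℕ) :
    totalHomDim ℂ tw.E (tw.P.functor.obj^[n] G) ≤ totalHomDim ℂ tw.E G := by
  induction n with
  | zero => rfl
  | succ n ih =>
    rw [Function.iterate_succ_apply']
    exact (tw.totalHomDim_P_le _).trans ih

theorem builtInSteps_iterate {G : D} {x c : ℕ} (hE : BuiltInSteps G c tw.E)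
    (hG : BuiltInSteps G x G) (n : ℕ) :
    BuiltInSteps G (x + 12 * c * totalHomDim ℂ tw.E G * n) (tw.P.functor.obj^[n] G) := by
  induction n with
  | zero => simpa using hG
  | succ n ih =>
    rw [Function.iterate_succ_apply']
    refine (tw.builtInSteps_P hE ih).mono ?_
    have := Nat.mul_le_mul_left (12 * c) (tw.totalHomDim_iterate_le G n)
    lia

end PdTwist

theorem tendsto_log_div_atTop_nhds_zero {a : ℕ → ℝ} {A B : ℝ} (h₁ : ∀ n, 1 ≤ a n)
    (h₂ : ∀ n : ℕ, a n ≤ A + B * n) :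
    Tendsto (fun n : ℕ => Real.log (a n) / n) atTop (nhds 0) := by
  have hlim : Tendsto (fun n : ℕ => Real.log (|A| + |B|) / (n : ℝ) + Real.log n / n) atTop
      (nhds 0) := by
    simpa using (tendsto_const_div_atTop_nhds_zero_nat (Real.log (|A| + |B|))).add
      (Real.isLittleO_log_id_atTop.tendsto_div_nhds_zero.comp tendsto_natCast_atTop_atTop)
  refine tendsto_of_tendsto_of_tendsto_of_le_of_le' tendsto_const_nhds hlim
    (.of_forall fun n => div_nonneg (Real.log_nonneg (h₁ n)) n.cast_nonneg) ?_
  filter_upwards [eventually_ge_atTop 1] with n hn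
  have hn' : (1 : ℝ) ≤ n := by exact_mod_cast hn
  have ha : a n ≤ (|A| + |B|) * n :=
    calc a n ≤ A + B * n := h₂ n
      _ ≤ |A| * n + |B| * n :=
        add_le_add ((le_abs_self A).trans (le_mul_of_one_le_right (abs_nonneg A) hn'))
          (mul_le_mul_of_nonneg_right (le_abs_self B) n.cast_nonneg)
      _ = (|A| + |B|) * n := (add_mul _ _ _).symm
  have ha₀ : (|A| + |B|) * n ≠ 0 := (one_pos.trans_le ((h₁ n).trans ha)).ne'
  calc Real.log (a n) / n
      ≤ Real.log ((|A| + |B|) * n) / n := by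
        gcongr
        exact one_pos.trans_le (h₁ n)
    _ = Real.log (|A| + |B|) / n + Real.log n / n := by
        rw [Real.log_mul (left_ne_zero_of_mul ha₀) (right_ne_zero_of_mul ha₀), add_div]

theorem log_spectralRadius_id (V : Type*) [NormedAddCommGroup V] [NormedSpace ℂ V] :
    Real.log (spectralRadius ℂ (ContinuousLinearMap.id ℂ V)).toReal = 0 := by
  rcases subsingleton_or_nontrivial V with h | h
  · simp
  · simp [← ContinuousLinearMap.one_def, spectralRadius, spectrum.one_eq]

theorem GY_conjecture_for_PdTwist_general (d : ℕ) (tw : PdTwist C d)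
    (V : Type*) [NormedAddCommGroup V] [NormedSpace ℂ V]
    (act : V →L[ℂ] V) (hact : act = ContinuousLinearMap.id ℂ V) :
    (∀ G : C, IsSplitGenerator C G →
      Tendsto (fun n : ℕ =>
          Real.log (complexity C G ((fun X => tw.P.functor.obj X)^[n] G) 0) / n)
        atTop (nhds 0)) ∧
    (0 : ℝ) = Real.log (spectralRadius ℂ act).toReal := by
  refine ⟨fun G hG => ?_, by rw [hact, log_spectralRadius_id]⟩
  obtain ⟨c, hE⟩ := inSplitClosure_iff.mp (hG tw.E)
  have hG₀ : ¬ IsZero G := hG.not_isZero tw.nonzero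
  refine tendsto_log_div_atTop_nhds_zero (A := 1) (B := (12 * c * totalHomDim ℂ tw.E G : ℕ))
    (fun n => one_le_complexity (fun h => hG₀ (tw.isZero_of_isZero_iterate h)) (hG _))
    fun n => ?_
  exact_mod_cast (tw.builtInSteps_iterate hE (.self G) n).complexity_le

/-- Gromov–Yomdin / Kikuta–Takahashi conjecture for `ℙ^d`-twists.
`h_0(P_ℰ) = 0 = log ρ((P_ℰ)_{H^*})`. Here `V` models the total cohomology `H^*(X; ℂ)` and
`act` models the induced Fourier–Mukai action `(P_ℰ)_{H^*}`, which is the identity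
(Huybrechts–Thomas); `ρ` is the spectral radius. -/
theorem GY_conjecture_for_PdTwist (d : ℕ) (tw : PdTwist C d)
    (hgen : ∃ G : C, IsSplitGenerator C G)
    (V : Type) [NormedAddCommGroup V] [NormedSpace ℂ V] [FiniteDimensional ℂ V]
    (act : V →L[ℂ] V) (hact : act = ContinuousLinearMap.id ℂ V) :
    (∀ G : C, IsSplitGenerator C G →
      Tendsto (fun n : ℕ =>
          Real.log (complexity C G ((fun X => tw.P.functor.obj X)^[n] G) 0) / n)
        atTop (nhds 0)) ∧
    (0 : ℝ) = Real.log (spectralRadius ℂ act).toReal :=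
  GY_conjecture_for_PdTwist_general C d tw V act hact
end

section
/- Let 𝒟 be a triangulated category with split generator G, and let A → B → C → A[1] be a distinguished triangle of nonzero objects in 𝒟. Then for every t ∈ ℝ, δ_t(G, B) ≤ δ_t(G, A) + δ_t(G, C). -/
open CategoryTheory CategoryTheory.Limits CategoryTheory.Pretriangulated Filter

universe v u

variable (C : Type u) [Category.{v} C] [Preadditive C] [HasZeroObject C]
  [HasShift C ℤ] [∀ n : ℤ, (shiftFunctor C n).Additive] [Pretriangulated C]
  [HasFiniteBiproducts C] [CategoryTheory.Linear ℂ C]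
  [∀ X Y : C, Module.Finite ℂ (X ⟶ Y)]

/-!
A tower for `A` and a tower for `Z` should concatenate to a tower for any extension `B` of `Z` by
`A`. This needs homotopy pullbacks of distinguished triangles, which the axioms of a pretriangulated
category (those of Verdier without the octahedral axiom) do not supply; Hom-finiteness makes up for
it. The base change of a triangle along a homotopy pullback square is always exact under `Hom`
functors, and an exact triangle becomes distinguished after a change of its third map: Artinian
rings have stable range one, so a comparison with the cone that is compatible with the first two
maps can be corrected to one compatible, up to an automorphism, with the third as well. Direct
summands are handled by realising an extension of retracts as a retract of an extension.
-/

section StableRange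

/-- A ring `R` has stable range one (in the sense of Bass) if `a + b * t` is a unit for some `t`
whenever `a * x + b = 1`. The element `b = 1 - a * x` is substituted in the definition. -/
def HasStableRangeOne (R : Type*) [Ring R] : Prop :=
  ∀ a x : R, ∃ t, IsUnit (a + (1 - a * x) * t)

namespace HasStableRangeOne

theorem of_ringEquiv {R S : Type*} [Ring R] [Ring S] (e : R ≃+* S) (hR : HasStableRangeOne R) :
    HasStableRangeOne S := by
  intro a x
  obtain ⟨t, ht⟩ := hR (e.symm a) (e.symm x)
  exact ⟨e t, by simpa using ht.map e⟩

theorem pi {ι : Type*} {R : ι → Type*} [∀ i, Ring (R i)] (hR : ∀ i, HasStableRangeOne (R i)) :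
    HasStableRangeOne (∀ i, R i) := by
  intro a x
  choose t ht using fun i => hR i (a i) (x i)
  exact ⟨t, Pi.isUnit_iff.2 ht⟩

-- `t` maps `ker a` isomorphically onto a complement of `range a` and kills a complement of `ker a`.
theorem moduleEnd (D V : Type*) [DivisionRing D] [AddCommGroup V] [Module D V]
    [Module.Finite D V] : HasStableRangeOne (Module.End D V) := by
  intro a x
  obtain ⟨L, hL⟩ := Submodule.exists_isCompl (LinearMap.range a)
  obtain ⟨K, hK⟩ := Submodule.exists_isCompl (LinearMap.ker a)
  have finrank_eq : Module.finrank D (LinearMap.ker a) = Module.finrank D L := by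
    have := LinearMap.finrank_range_add_finrank_ker a
    have := Submodule.finrank_add_eq_of_isCompl hL
    omega
  let e : LinearMap.ker a ≃ₗ[D] L := LinearEquiv.ofFinrankEq _ _ finrank_eq
  let π : V →ₗ[D] LinearMap.ker a := Submodule.projectionOnto _ _ hK
  refine ⟨L.subtype ∘ₗ e.toLinearMap ∘ₗ π, ?_⟩
  rw [LinearMap.isUnit_iff_ker_eq_bot, LinearMap.ker_eq_bot']
  intro v hv
  have add_eq_zero : a v + ((e (π v) : V) - a (x (e (π v)))) = 0 := by simpa using hv
  have mem_range : (e (π v) : V) ∈ LinearMap.range a := by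
    refine ⟨x (e (π v)) - v, ?_⟩
    rw [map_sub, ← sub_eq_zero, ← neg_eq_zero, ← add_eq_zero]
    abel
  have e_eq_zero : (e (π v) : V) = 0 :=
    Submodule.disjoint_def.1 hL.disjoint _ mem_range (e (π v)).2
  have mem_ker : a v = 0 := by simpa [e_eq_zero] using add_eq_zero
  have π_eq_zero : π v = 0 := e.injective (Subtype.ext (by simpa using e_eq_zero))
  have π_eq_self : π v = ⟨v, mem_ker⟩ := Submodule.projectionOnto_apply_left hK ⟨v, mem_ker⟩
  exact congrArg Subtype.val (π_eq_self.symm.trans π_eq_zero)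

theorem matrix (D n : Type*) [DivisionRing D] [Fintype n] [DecidableEq n] :
    HasStableRangeOne (Matrix n n D) :=
  have : Module.Finite Dᵐᵒᵖ D := Module.Finite.equiv (MulOpposite.opLinearEquiv Dᵐᵒᵖ).symm
  (moduleEnd Dᵐᵒᵖ (n → D)).of_ringEquiv <|
    (endVecRingEquivMatrixEnd n Dᵐᵒᵖ D).trans (RingEquiv.moduleEndSelfOp D).symm.mapMatrix

theorem of_isSemisimpleRing (R : Type*) [Ring R] [IsSemisimpleRing R] : HasStableRangeOne R := by
  obtain ⟨n, D, d, _, -, ⟨e⟩⟩ := IsSemisimpleRing.exists_ringEquiv_pi_matrix_divisionRing R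
  exact (pi fun i => matrix (D i) (Fin (d i))).of_ringEquiv e.symm

end HasStableRangeOne

theorem exists_mul_eq_one_of_sub_one_mem_jacobson {R : Type*} [Ring R] {w : R}
    (hw : w - 1 ∈ Ring.jacobson R) : ∃ z, z * w = 1 := by
  rw [← Ideal.jacobson_bot] at hw
  obtain ⟨z, hz⟩ := Ideal.exists_mul_sub_mem_of_sub_one_mem_jacobson w hw
  exact ⟨z, sub_eq_zero.1 hz⟩

theorem isUnit_of_sub_one_mem_jacobson {R : Type*} [Ring R] {w : R}
    (hw : w - 1 ∈ Ring.jacobson R) : IsUnit w := by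
  obtain ⟨z, hzw⟩ := exists_mul_eq_one_of_sub_one_mem_jacobson hw
  have hz : z - 1 ∈ Ring.jacobson R := by
    have : z - 1 = -(z * (w - 1)) := by rw [mul_sub, hzw]; noncomm_ring
    rw [this]
    exact neg_mem (Ideal.mul_mem_left _ z hw)
  obtain ⟨y, hyz⟩ := exists_mul_eq_one_of_sub_one_mem_jacobson hz
  exact isUnit_iff_exists_and_exists.2 ⟨⟨z, by rwa [← left_inv_eq_right_inv hyz hzw]⟩, ⟨z, hzw⟩⟩

theorem isUnit_of_isUnit_mk_jacobson {R : Type*} [Ring R] {c : R}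
    (hc : IsUnit (Ideal.Quotient.mk (Ring.jacobson R) c)) : IsUnit c := by
  obtain ⟨y', hcy, hyc⟩ := isUnit_iff_exists.1 hc
  obtain ⟨y, rfl⟩ := Ideal.Quotient.mk_surjective y'
  have isUnit_of_mk_eq_one {w : R} (hw : Ideal.Quotient.mk (Ring.jacobson R) w = 1) : IsUnit w :=
    isUnit_of_sub_one_mem_jacobson (Ideal.Quotient.eq.1 hw)
  obtain ⟨p, hp⟩ := (isUnit_of_mk_eq_one (w := c * y) (by simpa using hcy)).exists_right_inv
  obtain ⟨q, hq⟩ := (isUnit_of_mk_eq_one (w := y * c) (by simpa using hyc)).exists_left_inv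
  exact isUnit_iff_exists_and_exists.2 ⟨⟨y * p, by rwa [← mul_assoc]⟩, ⟨q * y, by rwa [mul_assoc]⟩⟩

theorem HasStableRangeOne.of_quotient_jacobson {R : Type*} [Ring R]
    (hR : HasStableRangeOne (R ⧸ Ring.jacobson R)) : HasStableRangeOne R := by
  intro a x
  obtain ⟨t', ht⟩ := hR (Ideal.Quotient.mk _ a) (Ideal.Quotient.mk _ x)
  obtain ⟨t, rfl⟩ := Ideal.Quotient.mk_surjective t'
  exact ⟨t, isUnit_of_isUnit_mk_jacobson (by simpa using ht)⟩

theorem HasStableRangeOne.of_isArtinianRing (R : Type*) [Ring R] [IsArtinianRing R] :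
    HasStableRangeOne R :=
  (of_isSemisimpleRing (R ⧸ Ring.jacobson R)).of_quotient_jacobson

end StableRange

section Pretriangulated

variable {D : Type*} [Category D] [Preadditive D] [HasShift D ℤ]

/-- A candidate triangle `X ⟶ Y ⟶ Z ⟶ X⟦1⟧`, not necessarily distinguished, which is exact in the
following sense: consecutive maps compose to zero, `Hom(V, -)` is exact at `Z` and at `X⟦1⟧`, and
`Hom(-, V)` is exact at `Y`. In a Hom-finite category these conditions suffice to make the triangle
distinguished after a change of its third map. -/
structure IsExactCandidate {X Y Z : D} (α : X ⟶ Y) (β : Y ⟶ Z) (γ : Z ⟶ X⟦(1 : ℤ)⟧) : Prop where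
  zero₁₂ : α ≫ β = 0
  zero₂₃ : β ≫ γ = 0
  zero₃₁ : γ ≫ α⟦(1 : ℤ)⟧' = 0
  coyoneda_exact₃ : ∀ {V : D} (w : V ⟶ Z), w ≫ γ = 0 → ∃ m, w = m ≫ β
  coyoneda_exact₁ : ∀ {V : D} (b : V ⟶ X⟦(1 : ℤ)⟧), b ≫ α⟦(1 : ℤ)⟧' = 0 → ∃ y, b = y ≫ γ
  yoneda_exact₂ : ∀ {V : D} (m : Y ⟶ V), α ≫ m = 0 → ∃ y, m = β ≫ y

namespace IsExactCandidate

variable {X Y Z : D} {α : X ⟶ Y} {β : Y ⟶ Z} {γ : Z ⟶ X⟦(1 : ℤ)⟧}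

theorem twist (hT : IsExactCandidate α β γ) (e : Z ≅ Z) (he : β ≫ e.hom ≫ γ = 0)
    (he' : β ≫ e.inv ≫ γ = 0) : IsExactCandidate α β (e.hom ≫ γ) where
  zero₁₂ := hT.zero₁₂
  zero₂₃ := he
  zero₃₁ := by rw [Category.assoc, hT.zero₃₁, comp_zero]
  coyoneda_exact₃ w hw := by
    obtain ⟨m, hm⟩ := hT.coyoneda_exact₃ (w ≫ e.hom) (by rwa [Category.assoc])
    obtain ⟨l, hl⟩ := hT.coyoneda_exact₃ (β ≫ e.inv) (by rwa [Category.assoc])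
    exact ⟨m ≫ l, by rw [← cancel_mono e.hom, hm, Category.assoc, Category.assoc, ← reassoc_of% hl,
      e.inv_hom_id, Category.comp_id]⟩
  coyoneda_exact₁ b hb := by
    obtain ⟨y, rfl⟩ := hT.coyoneda_exact₁ b hb
    exact ⟨y ≫ e.inv, by simp only [Category.assoc, e.inv_hom_id_assoc]⟩
  yoneda_exact₂ := hT.yoneda_exact₂

/-- The algebra of those endomorphisms of the third object of an exact candidate triangle which
lift the second map along itself, this being the condition `β ≫ f ≫ γ = 0`. Its units are the
automorphisms by which the third map may be twisted without losing exactness. -/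
def endSubalgebra (k : Type*) [CommRing k] [Linear k D] (hT : IsExactCandidate α β γ) :
    Subalgebra k (End Z) where
  carrier := {f | β ≫ f ≫ γ = 0}
  mul_mem' {f g} hf hg := by
    obtain ⟨m, hm⟩ := hT.coyoneda_exact₃ (β ≫ g) ((Category.assoc _ _ _).trans hg)
    have hf : β ≫ f ≫ γ = 0 := hf
    simp [End.mul_def, reassoc_of% hm, hf]
  add_mem' {f g} hf hg := by
    have hf : β ≫ f ≫ γ = 0 := hf
    have hg : β ≫ g ≫ γ = 0 := hg
    have hfg : β ≫ f ≫ γ + β ≫ g ≫ γ = 0 := by rw [hf, hg, add_zero]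
    rwa [← Preadditive.comp_add, ← Preadditive.add_comp] at hfg
  algebraMap_mem' r := by
    have : algebraMap k (End Z) r = r • 𝟙 Z := Algebra.algebraMap_eq_smul_one r
    change β ≫ algebraMap k (End Z) r ≫ γ = 0
    rw [this, Linear.smul_comp, Linear.comp_smul, Category.id_comp, hT.zero₂₃, smul_zero]

theorem hasStableRangeOne_endSubalgebra (k : Type*) [CommRing k] [Linear k D] [IsArtinianRing k]
    [Module.Finite k (Z ⟶ Z)] (hT : IsExactCandidate α β γ) :
    HasStableRangeOne (hT.endSubalgebra k) := by
  have : IsNoetherian k (End Z) := inferInstanceAs (IsNoetherian k (Z ⟶ Z))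
  have : Module.Finite k (hT.endSubalgebra k) :=
    inferInstanceAs (Module.Finite k (Subalgebra.toSubmodule (hT.endSubalgebra k)))
  have : IsArtinianRing (hT.endSubalgebra k) := IsArtinianRing.of_finite k _
  exact .of_isArtinianRing _

theorem exists_twist_eq (k : Type*) [CommRing k] [Linear k D] [IsArtinianRing k]
    [Module.Finite k (Z ⟶ Z)] (hT : IsExactCandidate α β γ) {a x : Z ⟶ Z}
    (ha : β ≫ a ≫ γ = 0) (hx : β ≫ x ≫ γ = 0) :
    ∃ (t : Z ⟶ Z) (e : Z ≅ Z), β ≫ t ≫ γ = 0 ∧ e.hom = a + t ≫ (𝟙 Z - x ≫ a) ∧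
      IsExactCandidate α β (e.hom ≫ γ) := by
  obtain ⟨t, v, hv⟩ := hT.hasStableRangeOne_endSubalgebra k ⟨a, ha⟩ ⟨x, hx⟩
  let e : Z ≅ Z := ⟨v.val.val, v.inv.val, congrArg Subtype.val v.inv_val,
    congrArg Subtype.val v.val_inv⟩
  exact ⟨t.val, e, t.2, congrArg Subtype.val hv, hT.twist e v.val.2 v.inv.2⟩

variable [HasZeroObject D] [∀ n : ℤ, (shiftFunctor D n).Additive] [Pretriangulated D]

theorem isIso_of_distTriang (hT : IsExactCandidate α β γ) {W : D} {β₀ : Y ⟶ W}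
    {γ₀ : W ⟶ X⟦(1 : ℤ)⟧} (hW : Triangle.mk α β₀ γ₀ ∈ distTriang D)
    (p : Z ⟶ W) (hp₂ : β ≫ p = β₀) (hp₃ : p ≫ γ₀ = γ) : IsIso p := by
  have : Mono p := Preadditive.mono_of_cancel_zero _ fun y hy => by
    obtain ⟨m, rfl⟩ := hT.coyoneda_exact₃ y (by rw [← hp₃, reassoc_of% hy, zero_comp])
    obtain ⟨b, rfl⟩ : ∃ b, m = b ≫ α :=
      Triangle.coyoneda_exact₂ _ hW m (by rwa [Category.assoc, hp₂] at hy)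
    rw [Category.assoc, hT.zero₁₂, comp_zero]
  obtain ⟨φ, hφ⟩ := hT.coyoneda_exact₁ γ₀ (comp_distTriang_mor_zero₃₁ _ hW)
  obtain ⟨m, hm⟩ : ∃ m, 𝟙 W - φ ≫ p = m ≫ β₀ := Triangle.coyoneda_exact₃ _ hW _ <|
    show (𝟙 W - φ ≫ p) ≫ γ₀ = 0 by
      rw [Preadditive.sub_comp, Category.id_comp, Category.assoc, hp₃, ← hφ, sub_self]
  have : IsSplitEpi p := ⟨⟨φ + m ≫ β, by
    rw [Preadditive.add_comp, Category.assoc, hp₂, ← hm, add_sub_cancel]⟩⟩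
  exact isIso_of_mono_of_isSplitEpi p

-- Arbitrary comparison maps `ψ : Z ⟶ W` and `φ : W ⟶ Z` compatible with the second maps need not
-- respect the third ones; stable range one provides the correction term `t` in `p`.
theorem exists_comparison (k : Type*) [CommRing k] [Linear k D] [IsArtinianRing k]
    [Module.Finite k (Z ⟶ Z)] (hT : IsExactCandidate α β γ) {W : D} {β₀ : Y ⟶ W}
    {γ₀ : W ⟶ X⟦(1 : ℤ)⟧} (hW : Triangle.mk α β₀ γ₀ ∈ distTriang D) :
    ∃ (p : Z ⟶ W) (e : Z ≅ Z), IsExactCandidate α β (e.hom ≫ γ) ∧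
      β ≫ p = β₀ ∧ p ≫ γ₀ = e.hom ≫ γ := by
  have zero₁₂ : α ≫ β₀ = 0 := comp_distTriang_mor_zero₁₂ _ hW
  have zero₂₃ : β₀ ≫ γ₀ = 0 := comp_distTriang_mor_zero₂₃ _ hW
  obtain ⟨φ, hφ⟩ : ∃ φ, β = β₀ ≫ φ := Triangle.yoneda_exact₂ _ hW β hT.zero₁₂
  obtain ⟨ψ, hψ⟩ := hT.yoneda_exact₂ β₀ zero₁₂
  obtain ⟨φ', hφ'⟩ := hT.coyoneda_exact₁ γ₀ (comp_distTriang_mor_zero₃₁ _ hW)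
  obtain ⟨ψ', hψ'⟩ : ∃ ψ', γ = ψ' ≫ γ₀ := Triangle.coyoneda_exact₁ _ hW γ hT.zero₃₁
  obtain ⟨s, hs⟩ : ∃ s, 𝟙 W - φ ≫ ψ = γ₀ ≫ s := Triangle.yoneda_exact₃ _ hW _ <|
    show β₀ ≫ (𝟙 W - φ ≫ ψ) = 0 by
      rw [Preadditive.comp_sub, Category.comp_id, ← reassoc_of% hφ, ← hψ, sub_self]
  have ha : β ≫ (ψ ≫ φ') ≫ γ = 0 := by
    rw [Category.assoc, ← hφ', ← reassoc_of% hψ, zero₂₃]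
  have hx : β ≫ (ψ' ≫ φ) ≫ γ = 0 := by
    obtain ⟨m, hm⟩ : ∃ m, β ≫ ψ' = m ≫ β₀ := Triangle.coyoneda_exact₃ _ hW (β ≫ ψ') <|
      show (β ≫ ψ') ≫ γ₀ = 0 by rw [Category.assoc, ← hψ', hT.zero₂₃]
    rw [Category.assoc, reassoc_of% hm, ← reassoc_of% hφ, hT.zero₂₃, comp_zero]
  have defect : (𝟙 Z - (ψ' ≫ φ) ≫ ψ ≫ φ') ≫ γ = γ ≫ s ≫ γ₀ := by
    have : φ ≫ ψ = 𝟙 W - γ₀ ≫ s := by rw [← hs, sub_sub_cancel]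
    simp only [Preadditive.sub_comp, Preadditive.comp_sub, Category.assoc, ← hφ',
      reassoc_of% this, Category.id_comp, ← hψ', ← reassoc_of% hψ', sub_sub_cancel]
  obtain ⟨t, e, ht, he, hT'⟩ := hT.exists_twist_eq k ha hx
  refine ⟨ψ + t ≫ γ ≫ s, e, hT', ?_, ?_⟩
  · rw [Preadditive.comp_add, ← hψ, reassoc_of% ht, zero_comp, add_zero]
  · rw [he, Preadditive.add_comp, Preadditive.add_comp, Category.assoc t, Category.assoc t, defect,
      Category.assoc ψ, ← hφ', Category.assoc γ]

theorem exists_distTriang (k : Type*) [CommRing k] [Linear k D] [IsArtinianRing k]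
    [Module.Finite k (Z ⟶ Z)] (hT : IsExactCandidate α β γ) :
    ∃ γ' : Z ⟶ X⟦(1 : ℤ)⟧, Triangle.mk α β γ' ∈ distTriang D := by
  obtain ⟨W, β₀, γ₀, hW⟩ := distinguished_cocone_triangle α
  obtain ⟨p, e, hT', hp₂, hp₃⟩ := hT.exists_comparison k hW
  have : IsIso p := hT'.isIso_of_distTriang hW p hp₂ hp₃
  let q : Z ≅ W := asIso p
  refine ⟨e.hom ≫ γ, isomorphic_distinguished _ hW _ <|
    Triangle.isoMk _ _ (Iso.refl X) (Iso.refl Y) q ?_ ?_ ?_⟩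
  · exact (Category.comp_id α).trans (Category.id_comp α).symm
  · exact hp₂.trans (Category.id_comp β₀).symm
  · exact (congrArg _ ((shiftFunctor D 1).map_id X)).trans ((Category.comp_id _).trans hp₃.symm)

end IsExactCandidate

variable [HasZeroObject D] [∀ n : ℤ, (shiftFunctor D n).Additive] [Pretriangulated D]

section HomotopyPullback

variable {E X Y Z : D} {a : E ⟶ Y} {b : E ⟶ X} {g : Y ⟶ Z} {f : X ⟶ Z} {δ : Z ⟶ E⟦(1 : ℤ)⟧}

theorem shift_map_biprodLift (a : E ⟶ Y) (b : E ⟶ X) :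
    (biprod.lift a b)⟦(1 : ℤ)⟧' =
      a⟦(1 : ℤ)⟧' ≫ biprod.inl⟦(1 : ℤ)⟧' + b⟦(1 : ℤ)⟧' ≫ biprod.inr⟦(1 : ℤ)⟧' := by
  rw [biprod.lift_eq, Functor.map_add, Functor.map_comp, Functor.map_comp]

theorem exists_morphism_cone {K : D}
    (hE : Triangle.mk (biprod.lift a b) (biprod.desc g f) δ ∈ distTriang D)
    {q : Z ⟶ K} {u : K ⟶ X⟦(1 : ℤ)⟧} (hf : Triangle.mk f q u ∈ distTriang D) :
    ∃ κ : K ⟶ E⟦(1 : ℤ)⟧, q ≫ κ = δ ∧ κ ≫ a⟦(1 : ℤ)⟧' = 0 ∧ κ ≫ b⟦(1 : ℤ)⟧' = -u := by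
  obtain ⟨κ, q_κ, u_inr⟩ : ∃ κ : K ⟶ E⟦(1 : ℤ)⟧, q ≫ κ = 𝟙 Z ≫ δ ∧
      u ≫ biprod.inr⟦(1 : ℤ)⟧' = κ ≫ (-(biprod.lift a b)⟦(1 : ℤ)⟧') :=
    complete_distinguished_triangle_morphism _ _ hf (rot_of_distTriang _ hE) biprod.inr (𝟙 Z)
      (show f ≫ 𝟙 Z = biprod.inr ≫ biprod.desc g f by rw [Category.comp_id, biprod.inr_desc])
  refine ⟨κ, q_κ.trans (Category.id_comp δ), ?_, ?_⟩
  · have := congrArg (· ≫ (biprod.fst : Y ⊞ X ⟶ Y)⟦(1 : ℤ)⟧') u_inr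
    simpa [← Functor.map_comp] using this
  · have := congrArg (· ≫ (biprod.snd : Y ⊞ X ⟶ X)⟦(1 : ℤ)⟧') u_inr
    simpa [← Functor.map_comp, eq_neg_iff_add_eq_zero, add_comm] using this

theorem exists_isExactCandidate_baseChange {K : D}
    (hE : Triangle.mk (biprod.lift a b) (biprod.desc g f) δ ∈ distTriang D)
    {q : Z ⟶ K} {u : K ⟶ X⟦(1 : ℤ)⟧} (hf : Triangle.mk f q u ∈ distTriang D) :
    ∃ κ : K ⟶ E⟦(1 : ℤ)⟧, IsExactCandidate a (g ≫ q) κ := by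
  have a_g : a ≫ g + b ≫ f = 0 := by
    rw [← biprod.lift_desc]
    exact comp_distTriang_mor_zero₁₂ _ hE
  have desc_δ : biprod.desc g f ≫ δ = 0 := comp_distTriang_mor_zero₂₃ _ hE
  have f_q : f ≫ q = 0 := comp_distTriang_mor_zero₁₂ _ hf
  obtain ⟨κ, q_κ, κ_a, κ_b⟩ := exists_morphism_cone hE hf
  refine ⟨κ, ?_, ?_, κ_a, fun w hw => ?_, fun c hc => ?_, fun m hm => ?_⟩
  · rw [reassoc_of% eq_neg_of_add_eq_zero_left a_g, Preadditive.neg_comp, Category.assoc, f_q,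
      comp_zero, neg_zero]
  · rw [Category.assoc, q_κ, ← biprod.inl_desc g f, Category.assoc, desc_δ, comp_zero]
  · obtain ⟨v, rfl⟩ : ∃ v, w = v ≫ q := Triangle.coyoneda_exact₃ _ hf w <|
      show w ≫ u = 0 by rw [← neg_eq_zero, ← Preadditive.comp_neg, ← κ_b, reassoc_of% hw, zero_comp]
    obtain ⟨m, rfl⟩ : ∃ m, v = m ≫ biprod.desc g f := Triangle.coyoneda_exact₃ _ hE v <|
      show v ≫ δ = 0 by rw [← q_κ, ← Category.assoc, hw]
    exact ⟨m ≫ biprod.fst, by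
      simp only [biprod.desc_eq, Preadditive.add_comp, Category.assoc, f_q, comp_zero, add_zero]⟩
  · obtain ⟨w, hw⟩ : ∃ w, c ≫ b⟦(1 : ℤ)⟧' = w ≫ u := Triangle.coyoneda_exact₁ _ hf _ <|
      show (c ≫ b⟦(1 : ℤ)⟧') ≫ f⟦(1 : ℤ)⟧' = 0 by
        rw [Category.assoc, ← Functor.map_comp, eq_neg_of_add_eq_zero_right a_g, Functor.map_neg,
          Functor.map_comp, Preadditive.comp_neg, reassoc_of% hc, zero_comp, neg_zero]
    obtain ⟨d, hd⟩ : ∃ d, c + w ≫ κ = d ≫ δ := Triangle.coyoneda_exact₁ _ hE _ <|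
      show (c + w ≫ κ) ≫ (biprod.lift a b)⟦(1 : ℤ)⟧' = 0 by
        simp [shift_map_biprodLift, reassoc_of% hc, reassoc_of% hw, reassoc_of% κ_a,
          reassoc_of% κ_b]
    exact ⟨d ≫ q - w, by
      rw [Preadditive.sub_comp, Category.assoc, q_κ, ← hd, add_sub_cancel_right]⟩
  · obtain ⟨l, hl⟩ : ∃ l, biprod.fst ≫ m = biprod.desc g f ≫ l := Triangle.yoneda_exact₂ _ hE _ <|
      show biprod.lift a b ≫ biprod.fst ≫ m = 0 by rw [biprod.lift_fst_assoc, hm]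
    have m_eq : m = g ≫ l := by simpa using congrArg (biprod.inl ≫ ·) hl
    obtain ⟨y, rfl⟩ : ∃ y, l = q ≫ y := Triangle.yoneda_exact₂ _ hf l <|
      show f ≫ l = 0 by simpa using (congrArg (biprod.inr ≫ ·) hl).symm
    exact ⟨y, by rw [m_eq, Category.assoc]⟩

theorem distTriang_biprod_swap
    (hE : Triangle.mk (biprod.lift a b) (biprod.desc g f) δ ∈ distTriang D) :
    Triangle.mk (biprod.lift b a) (biprod.desc f g) δ ∈ distTriang D := by
  refine isomorphic_distinguished _ hE _ <|
    Triangle.isoMk _ _ (Iso.refl E) (biprod.braiding X Y) (Iso.refl Z) ?_ ?_ ?_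
  · exact (biprod.hom_ext _ _ (by simp) (by simp) :
      biprod.lift b a ≫ (biprod.braiding X Y).hom = 𝟙 E ≫ biprod.lift a b)
  · exact (biprod.hom_ext' _ _ (by simp) (by simp) :
      biprod.desc f g ≫ 𝟙 Z = (biprod.braiding X Y).hom ≫ biprod.desc g f)
  · exact (by simp : δ ≫ (𝟙 E)⟦(1 : ℤ)⟧' = 𝟙 Z ≫ δ)

theorem exists_distTriang_homotopyPullback (k : Type*) [CommRing k] [Linear k D] [IsArtinianRing k]
    [∀ V W : D, Module.Finite k (V ⟶ W)] {K L : D}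
    {q : Z ⟶ K} {u : K ⟶ X⟦(1 : ℤ)⟧} (hf : Triangle.mk f q u ∈ distTriang D)
    {l : Z ⟶ L} {w : L ⟶ Y⟦(1 : ℤ)⟧} (hg : Triangle.mk g l w ∈ distTriang D) :
    ∃ (E : D) (a : E ⟶ Y) (b : E ⟶ X) (κ : K ⟶ E⟦(1 : ℤ)⟧) (κ' : L ⟶ E⟦(1 : ℤ)⟧),
      Triangle.mk a (g ≫ q) κ ∈ distTriang D ∧ Triangle.mk b (f ≫ l) κ' ∈ distTriang D := by
  obtain ⟨E, e, δ, hE⟩ := distinguished_cocone_triangle₁ (biprod.desc g f)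
  obtain ⟨a, b, rfl⟩ : ∃ a b, e = biprod.lift a b :=
    ⟨e ≫ biprod.fst, e ≫ biprod.snd, biprod.hom_ext _ _ (by simp) (by simp)⟩
  obtain ⟨_, hK⟩ := exists_isExactCandidate_baseChange hE hf
  obtain ⟨_, hL⟩ := exists_isExactCandidate_baseChange (distTriang_biprod_swap hE) hg
  obtain ⟨κ, hκ⟩ := hK.exists_distTriang k
  obtain ⟨κ', hκ'⟩ := hL.exists_distTriang k
  exact ⟨E, a, b, κ, κ', hκ, hκ'⟩

end HomotopyPullback

section Retract

variable {A B Z A' B' Z' : D} {f : A ⟶ B} {g : B ⟶ Z} {h : Z ⟶ A⟦(1 : ℤ)⟧}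

theorem exists_distTriang_retract (hT : Triangle.mk f g h ∈ distTriang D) (rA : Retract A A')
    (rZ : Retract Z Z') :
    ∃ (B' : D) (f' : A' ⟶ B') (g' : B' ⟶ Z') (h' : Z' ⟶ A'⟦(1 : ℤ)⟧),
      Triangle.mk f' g' h' ∈ distTriang D ∧ Nonempty (Retract B B') := by
  obtain ⟨B', f', g', hT'⟩ := distinguished_cocone_triangle₂ (rZ.r ≫ h ≫ rA.i⟦(1 : ℤ)⟧')
  obtain ⟨i, f_i, g_i⟩ : ∃ i : B ⟶ B', f ≫ i = rA.i ≫ f' ∧ g ≫ rZ.i = i ≫ g' :=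
    complete_distinguished_triangle_morphism₂ _ _ hT hT' rA.i rZ.i <|
      show h ≫ rA.i⟦(1 : ℤ)⟧' = rZ.i ≫ rZ.r ≫ h ≫ rA.i⟦(1 : ℤ)⟧' by rw [rZ.retract_assoc]
  obtain ⟨p, f'_p, g'_p⟩ : ∃ p : B' ⟶ B, f' ≫ p = rA.r ≫ f ∧ g' ≫ rZ.r = p ≫ g :=
    complete_distinguished_triangle_morphism₂ _ _ hT' hT rA.r rZ.r <|
      show (rZ.r ≫ h ≫ rA.i⟦(1 : ℤ)⟧') ≫ rA.r⟦(1 : ℤ)⟧' = rZ.r ≫ h by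
        rw [Category.assoc, Category.assoc, ← Functor.map_comp, rA.retract,
          CategoryTheory.Functor.map_id, Category.comp_id]
  let φ : Triangle.mk f g h ⟶ Triangle.mk f g h :=
    Triangle.homMk _ _ (𝟙 A) (i ≫ p) (𝟙 Z)
      (show f ≫ i ≫ p = 𝟙 A ≫ f by rw [reassoc_of% f_i, f'_p, rA.retract_assoc, Category.id_comp])
      (show g ≫ 𝟙 Z = (i ≫ p) ≫ g by
        rw [Category.assoc, ← g'_p, ← reassoc_of% g_i, rZ.retract])
      (show h ≫ (𝟙 A)⟦(1 : ℤ)⟧' = 𝟙 Z ≫ h by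
        rw [CategoryTheory.Functor.map_id, Category.comp_id, Category.id_comp])
  have : IsIso (i ≫ p) := isIso₂_of_isIso₁₃ φ hT hT (inferInstanceAs (IsIso (𝟙 A)))
    (inferInstanceAs (IsIso (𝟙 Z)))
  exact ⟨B', f', g', _, hT', ⟨⟨i, p ≫ inv (i ≫ p), by rw [← Category.assoc, IsIso.hom_inv_id]⟩⟩⟩

theorem exists_iso_biprod_of_retract_s5 (r : Retract A B) : ∃ A' : D, Nonempty (B ≅ A ⊞ A') := by
  obtain ⟨A', _, _, hT⟩ := distinguished_cocone_triangle r.i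
  obtain ⟨e, -⟩ := exists_iso_binaryBiproduct_of_distTriang _ hT
    (Triangle.mor₃_eq_zero_of_mono₁ _ hT (inferInstanceAs (Mono r.i)))
  exact ⟨A', ⟨e⟩⟩

end Retract

namespace BuildVal

variable {E A B Z : D} {t r s : ℝ}

theorem of_iso (hA : BuildVal D E t A r) (e : A ≅ B) : BuildVal D E t B r := by
  cases hA with
  | zero _ hZ => exact .zero B (hZ.of_iso e.symm)
  | step A' _ n r f g h hT hA' =>
    refine .step A' B n r (f ≫ e.hom) (e.inv ≫ g) h (isomorphic_distinguished _ hT _ ?_) hA'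
    exact Triangle.isoMk _ _ (Iso.refl _) e.symm (Iso.refl _)
      (by simp : (f ≫ e.hom) ≫ e.inv = 𝟙 A' ≫ f)
      (Category.comp_id (e.inv ≫ g))
      (by simp : h ≫ (𝟙 A')⟦(1 : ℤ)⟧' = 𝟙 _ ≫ h)

theorem nonneg (hB : BuildVal D E t B r) : 0 ≤ r := by
  induction hB with
  | zero => exact le_rfl
  | step => positivity

theorem exists_weight (hB : BuildVal D E t B r) (t' : ℝ) : ∃ r', BuildVal D E t' B r' := by
  induction hB with
  | zero Z hZ => exact ⟨0, .zero Z hZ⟩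
  | step A B n _ f g h hT _ ih =>
    obtain ⟨r', hA⟩ := ih
    exact ⟨_, .step A B n r' f g h hT hA⟩

-- Splitting off the last cone of the tower for `Z` needs a homotopy pullback along `g`. The
-- extension of `Z` by `A` is given in rotated form because the pullback returns it in this shape.
theorem extension (k : Type*) [CommRing k] [Linear k D] [IsArtinianRing k]
    [∀ V W : D, Module.Finite k (V ⟶ W)]
    (hA : BuildVal D E t A r) (hZ : BuildVal D E t Z s) {g : B ⟶ Z} {h : Z ⟶ A⟦(1 : ℤ)⟧}
    {f : A⟦(1 : ℤ)⟧ ⟶ B⟦(1 : ℤ)⟧} (hT : Triangle.mk g h f ∈ distTriang D) :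
    BuildVal D E t B (r + s) := by
  induction hZ generalizing B with
  | zero Z hZ =>
    have : IsIso f := (Triangle.isZero₂_iff_isIso₃ _ hT).1 hZ
    rw [add_zero]
    exact hA.of_iso ((shiftFunctor D (1 : ℤ)).preimageIso (asIso f))
  | step Z' Z n s f₁ g₁ h₁ hT₁ _ ih =>
    obtain ⟨P, a, b, κ, κ', hP, hP'⟩ := exists_distTriang_homotopyPullback k hT₁ hT
    rw [← add_assoc]
    exact .step P B n _ a (g ≫ g₁) κ hP (ih hP')

end BuildVal

section Complexity

variable {E F A B Z : D} {t r : ℝ}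

theorem mem_complexitySet_iff :
    r ∈ complexitySet D E F t ↔ ∃ B, BuildVal D E t B r ∧ Nonempty (Retract F B) := by
  constructor
  · rintro ⟨B, F', hB, ⟨e⟩⟩
    exact ⟨B, hB, ⟨⟨biprod.inl ≫ e.inv, e.hom ≫ biprod.fst, by simp⟩⟩⟩
  · rintro ⟨B, hB, ⟨ρ⟩⟩
    obtain ⟨F', he⟩ := exists_iso_biprod_of_retract_s5 ρ
    exact ⟨B, F', hB, he⟩

theorem bddBelow_complexitySet (E F : D) (t : ℝ) : BddBelow (complexitySet D E F t) :=
  ⟨0, fun _ ⟨_, _, hB, _⟩ => hB.nonneg⟩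

theorem InSplitClosure.complexitySet_nonempty (hF : InSplitClosure D E F) (t : ℝ) :
    (complexitySet D E F t).Nonempty := by
  obtain ⟨_, B, F', hB, he⟩ := hF
  obtain ⟨r, hB'⟩ := hB.exists_weight t
  exact ⟨r, B, F', hB', he⟩

open scoped Pointwise in
theorem complexitySet_add_subset (k : Type*) [CommRing k] [Linear k D] [IsArtinianRing k]
    [∀ V W : D, Module.Finite k (V ⟶ W)]
    {f : A ⟶ B} {g : B ⟶ Z} {h : Z ⟶ A⟦(1 : ℤ)⟧}
    (hT : Triangle.mk f g h ∈ distTriang D) (E : D) (t : ℝ) :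
    complexitySet D E A t + complexitySet D E Z t ⊆ complexitySet D E B t := by
  rintro _ ⟨r, hr, s, hs, rfl⟩
  obtain ⟨A', hA', ⟨ρA⟩⟩ := mem_complexitySet_iff.1 hr
  obtain ⟨Z', hZ', ⟨ρZ⟩⟩ := mem_complexitySet_iff.1 hs
  obtain ⟨B', f', g', h', hT', ρB⟩ := exists_distTriang_retract hT ρA ρZ
  exact mem_complexitySet_iff.2 ⟨B', hA'.extension k hZ' (rot_of_distTriang _ hT'), ρB⟩

theorem complexity_le_of_distTriang_general (k : Type*) [CommRing k] [Linear k D] [IsArtinianRing k]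
    [∀ V W : D, Module.Finite k (V ⟶ W)] {G : D} (hA : InSplitClosure D G A)
    (hZ : InSplitClosure D G Z) {f : A ⟶ B} {g : B ⟶ Z} {h : Z ⟶ A⟦(1 : ℤ)⟧}
    (hT : Triangle.mk f g h ∈ distTriang D) (t : ℝ) :
    complexity D G B t ≤ complexity D G A t + complexity D G Z t := by
  have hA' := hA.complexitySet_nonempty t
  have hZ' := hZ.complexitySet_nonempty t
  unfold complexity
  rw [← csInf_add hA' (bddBelow_complexitySet G A t) hZ' (bddBelow_complexitySet G Z t)]
  exact csInf_le_csInf (bddBelow_complexitySet G B t) (hA'.add hZ')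
    (complexitySet_add_subset k hT G t)

end Complexity

end Pretriangulated

/-- For a distinguished triangle `A → B → C → A[1]` of nonzero objects,
`δ_t(G, B) ≤ δ_t(G, A) + δ_t(G, C)`. -/
theorem complexity_le_of_distTriang (G : C) (hG : IsSplitGenerator C G)
    (A B Z : C) (hA : ¬ IsZero A) (hB : ¬ IsZero B) (hZ : ¬ IsZero Z)
    (f : A ⟶ B) (g : B ⟶ Z) (h : Z ⟶ (shiftFunctor C (1 : ℤ)).obj A)
    (hT : Triangle.mk f g h ∈ distTriang C) (t : ℝ) :
    complexity C G B t ≤ complexity C G A t + complexity C G Z t :=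
  complexity_le_of_distTriang_general ℂ (hG A) (hG Z) hT t
end
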